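/- (Theorem 15) Let 0 < θ₁ < 1, 0 ≤ θ < 1, 0 < q₁, r, r₁ ≤ ∞, a, a₁, b₁ ∈ SV, and ‖s^{-1/r₁} b₁(s)/a₁(s)‖_{r₁,(1,∞)} < ∞; if θ = 0 assume additionally ‖s^{-1/r} a(s)‖_{r,(1,∞)} < ∞. Put c₁(t) = a₁(t) ‖s^{-1/r₁} b₁(s)/a₁(s)‖_{r₁,(t,∞)} and ρ(t) = t^{θ₁}/c₁(t). Then (A₀, Ā^𝓛_{θ₁,r₁,b₁,q₁,a₁})_{θ,r;a} ≅ Ā_{η,r;a^#}, where η = θθ₁ and a^#(t) = c₁(t)^θ a(ρ(t)). -/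

import Mathlib

open MeasureTheory Set ENNReal Filter

noncomputable section

/-- The `L_q` quasi-norm (with respect to Lebesgue measure) of an `ℝ≥0∞`-valued
function over a set of reals; for `q = ∞` it is the essential supremum. -/
def LqNorm (q : ℝ≥0∞) (s : Set ℝ) (g : ℝ → ℝ≥0∞) : ℝ≥0∞ :=
  if q = ∞ then essSup g (volume.restrict s)
  else (∫⁻ t in s, g t ^ q.toReal) ^ q⁻¹.toReal

/-- The weight `s ↦ s ^ (-1/r) * b s`, as an `ℝ≥0∞`-valued function
(`1/∞ = 0` by convention). -/
def svWgt (r : ℝ≥0∞) (b : ℝ → ℝ) : ℝ → ℝ≥0∞ :=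
  fun s => ENNReal.ofReal (s ^ (-(r⁻¹.toReal)) * b s)

/-- `f` and `g` are equivalent on `s`: each is bounded by a constant multiple
of the other there. -/
def EquivOn (s : Set ℝ) (f g : ℝ → ℝ) : Prop :=
  ∃ C : ℝ, 0 < C ∧ ∀ t ∈ s, C⁻¹ * g t ≤ f t ∧ f t ≤ C * g t

/-- A positive measurable function `b` on `(0,∞)` is slowly varying if for every
`ε > 0`, `t ^ ε * b t` is equivalent to a non-decreasing function and
`t ^ (-ε) * b t` is equivalent to a non-increasing function. -/
def SlowlyVarying (b : ℝ → ℝ) : Prop :=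
  AEMeasurable b (volume.restrict (Ioi 0)) ∧ (∀ t ∈ Ioi (0:ℝ), 0 < b t) ∧
    ∀ ε : ℝ, 0 < ε →
      (∃ g : ℝ → ℝ, MonotoneOn g (Ioi 0) ∧ EquivOn (Ioi 0) (fun t => t ^ ε * b t) g) ∧
      (∃ g : ℝ → ℝ, AntitoneOn g (Ioi 0) ∧ EquivOn (Ioi 0) (fun t => t ^ (-ε) * b t) g)

/-- A quasi-Banach space continuously embedded into the ambient (Hausdorff) space `E`,
recorded via its extended-real-valued quasi-norm; the space itself is the set of
vectors of finite quasi-norm. -/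
structure QuasiBanach (E : Type*) [AddCommGroup E] [Module ℝ E] where
  N : E → ℝ≥0∞
  zero : N 0 = 0
  definite : ∀ x, N x = 0 → x = 0
  smul : ∀ (c : ℝ) (x : E), N (c • x) = ENNReal.ofReal |c| * N x
  quasi : ∃ C : ℝ≥0∞, 1 ≤ C ∧ C ≠ ∞ ∧ ∀ x y, N (x + y) ≤ C * (N x + N y)
  complete : ∀ f : ℕ → E,
    (∀ ε : ℝ≥0∞, 0 < ε → ∃ M : ℕ, ∀ m ≥ M, ∀ n ≥ M, N (f m - f n) < ε) →
    (∀ n, N (f n) ≠ ∞) →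
    ∃ g : E, N g ≠ ∞ ∧ Tendsto (fun n => N (f n - g)) atTop (nhds 0)

variable {E : Type*} [AddCommGroup E] [Module ℝ E]

/-- The Peetre K-functional of the couple whose quasi-norms are `N₀`, `N₁`. -/
def Kf (N₀ N₁ : E → ℝ≥0∞) (t : ℝ) (f : E) : ℝ≥0∞ :=
  ⨅ g : E, N₀ g + ENNReal.ofReal t * N₁ (f - g)

/-- The quasi-norm of the real interpolation space `Ā_{θ,q;b}`. -/
def normK (N₀ N₁ : E → ℝ≥0∞) (θ : ℝ) (q : ℝ≥0∞) (b : ℝ → ℝ) (f : E) : ℝ≥0∞ :=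
  LqNorm q (Ioi 0) fun u =>
    ENNReal.ofReal (u ^ (-θ - q⁻¹.toReal) * b u) * Kf N₀ N₁ u f

/-- The quasi-norm of the limiting interpolation space `Ā^𝓛_{σ,r,b,q,a}`. -/
def normL (N₀ N₁ : E → ℝ≥0∞) (σ : ℝ) (r q : ℝ≥0∞) (b a : ℝ → ℝ) (f : E) : ℝ≥0∞ :=
  LqNorm r (Ioi 0) fun t =>
    ENNReal.ofReal (t ^ (-(r⁻¹.toReal)) * (b t / a t)) *
      LqNorm q (Ioo 0 t) fun u =>
        ENNReal.ofReal (u ^ (-σ - q⁻¹.toReal) * a u) * Kf N₀ N₁ u f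

/-- The quasi-norm of the limiting interpolation space `Ā^𝓡_{σ,r,b,q,a}`. -/
def normR (N₀ N₁ : E → ℝ≥0∞) (σ : ℝ) (r q : ℝ≥0∞) (b a : ℝ → ℝ) (f : E) : ℝ≥0∞ :=
  LqNorm r (Ioi 0) fun t =>
    ENNReal.ofReal (t ^ (-(r⁻¹.toReal)) * (b t / a t)) *
      LqNorm q (Ioi t) fun u =>
        ENNReal.ofReal (u ^ (-σ - q⁻¹.toReal) * a u) * Kf N₀ N₁ u f

/-- Two (extended-real-valued) quasi-norms define the same space with
equivalent quasi-norms. -/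
def EquivNorms (nX nY : E → ℝ≥0∞) : Prop :=
  ∃ C : ℝ≥0∞, 0 < C ∧ C ≠ ∞ ∧ ∀ f : E, C⁻¹ * nY f ≤ nX f ∧ nX f ≤ C * nY f

lemma Lq_mono {q : ℝ≥0∞} {s : Set ℝ} (hs : MeasurableSet s) {f g : ℝ → ℝ≥0∞}
    (h : ∀ u ∈ s, f u ≤ g u) : LqNorm q s f ≤ LqNorm q s g := by
  unfold LqNorm
  split_ifs with hq
  · exact essSup_mono_ae ((ae_restrict_iff' hs).2 (Eventually.of_forall h))
  · refine ENNReal.rpow_le_rpow ?_ ENNReal.toReal_nonneg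
    refine setLIntegral_mono' hs fun x hx => ?_
    exact ENNReal.rpow_le_rpow (h x hx) ENNReal.toReal_nonneg

lemma Lq_mono_set {q : ℝ≥0∞} {s t : Set ℝ} (hst : s ⊆ t) (f : ℝ → ℝ≥0∞) :
    LqNorm q s f ≤ LqNorm q t f := by
  unfold LqNorm
  split_ifs with hq
  · exact essSup_mono_measure' (Measure.restrict_mono hst le_rfl)
  · refine ENNReal.rpow_le_rpow ?_ ENNReal.toReal_nonneg
    exact lintegral_mono_set hst

lemma qinv {q : ℝ≥0∞} (hq : 0 < q) (h : q ≠ ∞) : 0 < q.toReal ∧ q⁻¹.toReal = q.toReal⁻¹ := 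
  ⟨ENNReal.toReal_pos hq.ne' h, ENNReal.toReal_inv q⟩

lemma Lq_const_mul_ge {q : ℝ≥0∞} (hq : 0 < q) (s : Set ℝ) (c : ℝ≥0∞) (f : ℝ → ℝ≥0∞) :
    c * LqNorm q s f ≤ LqNorm q s (fun u => c * f u) := by
  unfold LqNorm
  split_ifs with h
  · exact (ENNReal.essSup_const_mul).ge
  · obtain ⟨h1, h2⟩ := qinv hq h
    have : c = (c ^ q.toReal) ^ q⁻¹.toReal := by
      rw [h2, ENNReal.rpow_rpow_inv h1.ne']
    nth_rewrite 1 [this]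
    rw [← ENNReal.mul_rpow_of_nonneg _ _ ENNReal.toReal_nonneg]
    refine ENNReal.rpow_le_rpow ?_ ENNReal.toReal_nonneg
    simp_rw [ENNReal.mul_rpow_of_nonneg _ _ h1.le]
    exact lintegral_const_mul_le _ _

lemma Lq_const_mul {q : ℝ≥0∞} (hq : 0 < q) (s : Set ℝ) {c : ℝ≥0∞} (hc : c ≠ ∞)
    (f : ℝ → ℝ≥0∞) :
    LqNorm q s (fun u => c * f u) = c * LqNorm q s f := by
  unfold LqNorm
  split_ifs with h
  · exact (ENNReal.essSup_const_mul)
  · obtain ⟨h1, h2⟩ := qinv hq h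
    have : c = (c ^ q.toReal) ^ q⁻¹.toReal := by
      rw [h2, ENNReal.rpow_rpow_inv h1.ne']
    nth_rewrite 2 [this]
    rw [← ENNReal.mul_rpow_of_nonneg _ _ ENNReal.toReal_nonneg]
    simp_rw [ENNReal.mul_rpow_of_nonneg _ _ h1.le]
    rw [lintegral_const_mul' _ _ (ENNReal.rpow_ne_top_of_nonneg h1.le hc)]

/-- pointwise domination by a constant multiple -/
lemma Lq_dom {q : ℝ≥0∞} (hq : 0 < q) {s : Set ℝ} (hs : MeasurableSet s) {c : ℝ≥0∞} (hc : c ≠ ∞)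
    {f g : ℝ → ℝ≥0∞} (h : ∀ u ∈ s, f u ≤ c * g u) : LqNorm q s f ≤ c * LqNorm q s g :=
  (Lq_mono hs h).trans (Lq_const_mul hq s hc g).le

lemma rpow_add_le_two {x y : ℝ≥0∞} {p : ℝ} (hp : 0 ≤ p) :
    (x + y) ^ p ≤ 2 ^ p * (x ^ p + y ^ p) := by
  have h1 : x + y ≤ 2 * max x y := by
    rw [two_mul]; exact add_le_add (le_max_left _ _) (le_max_right _ _)
  refine (ENNReal.rpow_le_rpow h1 hp).trans ?_
  rw [ENNReal.mul_rpow_of_nonneg _ _ hp]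
  gcongr
  rcases le_total x y with h | h
  · rw [max_eq_right h]; exact le_add_self
  · rw [max_eq_left h]; exact le_self_add

lemma Lq_union {q : ℝ≥0∞} (s t : Set ℝ) (f : ℝ → ℝ≥0∞) :
    LqNorm q (s ∪ t) f ≤ 2 ^ q⁻¹.toReal * (LqNorm q s f + LqNorm q t f) := by
  unfold LqNorm
  split_ifs with h
  · simp only [h, ENNReal.inv_top, ENNReal.toReal_zero, ENNReal.rpow_zero, one_mul]
    refine essSup_le_of_ae_le _ ?_
    rw [Filter.EventuallyLE, ae_restrict_union_iff]
    constructor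
    · filter_upwards [ENNReal.ae_le_essSup (μ := volume.restrict s) f] with x hx
      exact hx.trans le_self_add
    · filter_upwards [ENNReal.ae_le_essSup (μ := volume.restrict t) f] with x hx
      exact hx.trans le_add_self
  · refine le_trans ?_ (rpow_add_le_two ENNReal.toReal_nonneg)
    refine ENNReal.rpow_le_rpow ?_ ENNReal.toReal_nonneg
    exact lintegral_union_le _ _ _

lemma two_rpow_ne_top (q : ℝ≥0∞) : (2:ℝ≥0∞) ^ q⁻¹.toReal ≠ ∞ :=
  ENNReal.rpow_ne_top_of_nonneg ENNReal.toReal_nonneg (by simp)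

lemma Lq_const {q : ℝ≥0∞} (hq : 0 < q) {x y : ℝ} (hxy : x < y) (k : ℝ≥0∞) :
    LqNorm q (Ioo x y) (fun _ => k) = ENNReal.ofReal ((y - x) ^ q⁻¹.toReal) * k := by
  unfold LqNorm
  have hv : (volume.restrict (Ioo x y)) ≠ 0 := by
    intro h
    have := congrArg (fun m : Measure ℝ => m univ) h
    simp at this
    linarith
  split_ifs with h
  · simp only [h, ENNReal.inv_top, ENNReal.toReal_zero, Real.rpow_zero, ENNReal.ofReal_one, one_mul]
    exact essSup_const _ hv
  · obtain ⟨h1, h2⟩ := qinv hq h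
    simp only [lintegral_const, Measure.restrict_apply MeasurableSet.univ, univ_inter, Real.volume_Ioo]
    rw [ENNReal.mul_rpow_of_nonneg _ _ ENNReal.toReal_nonneg, h2, ENNReal.rpow_rpow_inv h1.ne',
      mul_comm, ENNReal.ofReal_rpow_of_nonneg (by linarith) (by positivity)]

lemma ofReal_rpow_pow {q : ℝ≥0∞} (hq : 0 < q) (h : q ≠ ∞) {u e : ℝ} (hu : 0 < u) :
    ENNReal.ofReal (u ^ (e - q⁻¹.toReal)) ^ q.toReal = ENNReal.ofReal (u ^ (e * q.toReal - 1)) := by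
  obtain ⟨h1, h2⟩ := qinv hq h
  rw [ENNReal.ofReal_rpow_of_nonneg (by positivity) h1.le, ← Real.rpow_mul hu.le, h2, sub_mul,
    inv_mul_cancel₀ h1.ne']

lemma Lq_pow_Ioc {q : ℝ≥0∞} (hq : 0 < q) {α : ℝ} (hα : 0 < α) :
    ∃ C : ℝ≥0∞, C ≠ ∞ ∧ ∀ s : ℝ, 0 < s →
      LqNorm q (Ioc 0 s) (fun u => ENNReal.ofReal (u ^ (α - q⁻¹.toReal)))
        ≤ C * ENNReal.ofReal (s ^ α) := by
  by_cases h : q = ∞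
  · refine ⟨1, by simp, fun s hs => ?_⟩
    simp only [LqNorm, h, if_true, one_mul]
    refine essSup_le_of_ae_le _ ((ae_restrict_iff' measurableSet_Ioc).2 (Eventually.of_forall ?_))
    intro u hu
    simp only [ENNReal.inv_top, ENNReal.toReal_zero, sub_zero]
    exact ENNReal.ofReal_le_ofReal (Real.rpow_le_rpow hu.1.le hu.2 hα.le)
  · obtain ⟨h1, h2⟩ := qinv hq h
    refine ⟨ENNReal.ofReal ((α * q.toReal)⁻¹ ^ q.toReal⁻¹), by simp, fun s hs => ?_⟩
    simp only [LqNorm, h, if_false]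
    have h3 : ∫⁻ u in Ioc 0 s, ENNReal.ofReal (u ^ (α - q⁻¹.toReal)) ^ q.toReal
        = ENNReal.ofReal (s ^ (α * q.toReal) * (α * q.toReal)⁻¹) := by
      rw [setLIntegral_congr_fun measurableSet_Ioc
        (fun u hu => ofReal_rpow_pow hq h hu.1)]
      have hpos : 0 < α * q.toReal := by positivity
      have hi : IntervalIntegrable (fun u : ℝ => u ^ (α * q.toReal - 1)) volume 0 s :=
        intervalIntegral.intervalIntegrable_rpow' (by linarith)
      rw [← ofReal_integral_eq_lintegral_ofReal]
      · rw [← intervalIntegral.integral_of_le hs.le, integral_rpow (Or.inl (by linarith))]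
        rw [sub_add_cancel, Real.zero_rpow hpos.ne', sub_zero, div_eq_mul_inv]
      · exact (intervalIntegrable_iff_integrableOn_Ioc_of_le hs.le).1 hi
      · exact (ae_restrict_iff' measurableSet_Ioc).2 (Eventually.of_forall fun u hu =>
          Real.rpow_nonneg hu.1.le _)
    rw [h3, h2, ENNReal.ofReal_rpow_of_nonneg (by positivity) (by positivity),
      ← ENNReal.ofReal_mul (by positivity), Real.mul_rpow (by positivity) (by positivity),
      ← Real.rpow_mul hs.le, mul_assoc, mul_inv_cancel₀ h1.ne', mul_one, mul_comm]

lemma Lq_pow_Ioi {q : ℝ≥0∞} (hq : 0 < q) {α : ℝ} (hα : 0 < α) :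
    ∃ C : ℝ≥0∞, C ≠ ∞ ∧ ∀ s : ℝ, 0 < s →
      LqNorm q (Ioi s) (fun u => ENNReal.ofReal (u ^ (-α - q⁻¹.toReal)))
        ≤ C * ENNReal.ofReal (s ^ (-α)) := by
  by_cases h : q = ∞
  · refine ⟨1, by simp, fun s hs => ?_⟩
    simp only [LqNorm, h, if_true, one_mul]
    refine essSup_le_of_ae_le _ ((ae_restrict_iff' measurableSet_Ioi).2 (Eventually.of_forall ?_))
    intro u hu
    simp only [ENNReal.inv_top, ENNReal.toReal_zero, sub_zero]
    exact ENNReal.ofReal_le_ofReal (Real.rpow_le_rpow_of_nonpos hs (le_of_lt hu) (by linarith))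
  · obtain ⟨h1, h2⟩ := qinv hq h
    refine ⟨ENNReal.ofReal ((α * q.toReal)⁻¹ ^ q.toReal⁻¹), by simp, fun s hs => ?_⟩
    simp only [LqNorm, h, if_false]
    have hpos : 0 < α * q.toReal := by positivity
    have h3 : ∫⁻ u in Ioi s, ENNReal.ofReal (u ^ (-α - q⁻¹.toReal)) ^ q.toReal
        = ENNReal.ofReal (s ^ (-α * q.toReal) * (α * q.toReal)⁻¹) := by
      rw [setLIntegral_congr_fun measurableSet_Ioi
        (fun u hu => ofReal_rpow_pow hq h (hs.trans hu))]
      rw [← ofReal_integral_eq_lintegral_ofReal]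
      · rw [integral_Ioi_rpow_of_lt (by linarith) hs, sub_add_cancel]
        congr 1
        rw [neg_mul, div_neg, neg_div, neg_neg, div_eq_mul_inv]
      · exact integrableOn_Ioi_rpow_of_lt (by linarith) hs
      · exact (ae_restrict_iff' measurableSet_Ioi).2 (Eventually.of_forall fun u hu =>
          Real.rpow_nonneg (hs.trans hu).le _)
    rw [h3, h2, ENNReal.ofReal_rpow_of_nonneg (by positivity) (by positivity),
      ← ENNReal.ofReal_mul (by positivity), Real.mul_rpow (by positivity) (by positivity),
      ← Real.rpow_mul hs.le, mul_assoc, mul_inv_cancel₀ h1.ne', mul_one, mul_comm]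

/-- symmetric form of slow variation -/
def SVs (b : ℝ → ℝ) : Prop :=
  (∀ t, 0 < t → 0 < b t) ∧ ∀ ε : ℝ, 0 < ε → ∃ C : ℝ, 1 ≤ C ∧ ∀ x y L : ℝ, 0 < x → 0 < y →
    1 ≤ L → x ≤ L * y → y ≤ L * x → b x ≤ C * L ^ ε * b y

lemma SVs.of_C {b : ℝ → ℝ} (hb : ∀ t, 0 < t → 0 < b t) {ε C : ℝ} (hε : 0 < ε) (hC : 0 < C)
    (h1 : ∀ x y : ℝ, 0 < x → x ≤ y → b x ≤ C * (y / x) ^ ε * b y)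
    (h2 : ∀ x y : ℝ, 0 < x → x ≤ y → b y ≤ C * (y / x) ^ ε * b x) :
    ∃ C : ℝ, 1 ≤ C ∧ ∀ x y L : ℝ, 0 < x → 0 < y →
    1 ≤ L → x ≤ L * y → y ≤ L * x → b x ≤ C * L ^ ε * b y := by
  refine ⟨max C 1, le_max_right _ _, fun x y L hx hy hL hxy hyx => ?_⟩
  have hby := hb y hy
  have key : ∀ z : ℝ, 0 ≤ z → z ≤ L → C * z ^ ε * b y ≤ max C 1 * L ^ ε * b y := by
    intro z hz hzL
    have := Real.rpow_le_rpow hz hzL hε.le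
    have h0 : 0 ≤ z ^ ε := Real.rpow_nonneg hz _
    gcongr
    exact le_max_left _ _
  rcases le_total x y with h | h
  · exact (h1 x y hx h).trans (key _ (by positivity) ((div_le_iff₀ hx).2 hyx))
  · exact (h2 y x hy h).trans (key _ (by positivity) ((div_le_iff₀ hy).2 hxy))

lemma SlowlyVarying.svs {b : ℝ → ℝ} (h : SlowlyVarying b) : SVs b := by
  obtain ⟨-, hpos, h⟩ := h
  refine ⟨hpos, fun ε hε => ?_⟩
  obtain ⟨⟨g, hg, C, hC, hgC⟩, ⟨k, hk, D, hD, hkD⟩⟩ := h ε hε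
  have h1 : ∀ x y : ℝ, 0 < x → x ≤ y → b x ≤ (C * C) * (y / x) ^ ε * b y := by
    intro x y hx hxy
    have hy : 0 < y := hx.trans_le hxy
    have e1 := (hgC x hx).2
    have e2 := (hgC y hy).1
    have e3 := hg hx hy hxy
    simp only at e1 e2
    rw [inv_mul_le_iff₀ hC] at e2
    have e4 : x ^ ε * b x ≤ C * (C * (y ^ ε * b y)) :=
      e1.trans (mul_le_mul_of_nonneg_left (e3.trans e2) hC.le)
    have hxe : 0 < x ^ ε := by positivity
    rw [Real.div_rpow hy.le hx.le]
    rw [show C * C * (y ^ ε / x ^ ε) * b y = (C * (C * (y ^ ε * b y))) / x ^ ε by ring]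
    rw [le_div_iff₀ hxe]; linarith
  have h2 : ∀ x y : ℝ, 0 < x → x ≤ y → b y ≤ (D * D) * (y / x) ^ ε * b x := by
    intro x y hx hxy
    have hy : 0 < y := hx.trans_le hxy
    have e1 := (hkD y hy).2
    have e2 := (hkD x hx).1
    have e3 := hk hx hy hxy
    simp only at e1 e2
    rw [inv_mul_le_iff₀ hD] at e2
    have e4 : y ^ (-ε) * b y ≤ D * (D * (x ^ (-ε) * b x)) :=
      e1.trans (mul_le_mul_of_nonneg_left (e3.trans e2) hD.le)
    have hye : 0 < y ^ (-ε) := by positivity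
    rw [Real.div_rpow hy.le hx.le]
    rw [Real.rpow_neg hx.le, Real.rpow_neg hy.le, inv_mul_le_iff₀ (by positivity)] at e4
    refine e4.trans (le_of_eq ?_)
    rw [div_eq_mul_inv]; ring
  have hbx := hpos
  have hmax : ∀ x y : ℝ, 0 < x → 0 < y → 0 ≤ (y / x) ^ ε := fun x y hx hy => by positivity
  refine SVs.of_C hpos hε (C := max (C * C) (D * D)) (by positivity) ?_ ?_
  · intro x y hx hxy
    have hy : 0 < y := hx.trans_le hxy
    have := hpos y hy
    refine (h1 x y hx hxy).trans ?_
    gcongr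
    exact le_max_left _ _
  · intro x y hx hxy
    have hy : 0 < y := hx.trans_le hxy
    have := hpos x hx
    refine (h2 x y hx hxy).trans ?_
    gcongr
    exact le_max_right _ _

lemma SVs.mul {a b : ℝ → ℝ} (ha : SVs a) (hb : SVs b) : SVs (fun t => a t * b t) := by
  refine ⟨fun t ht => mul_pos (ha.1 t ht) (hb.1 t ht), fun ε hε => ?_⟩
  obtain ⟨C, hC, h1⟩ := ha.2 (ε/2) (by positivity)
  obtain ⟨D, hD, h2⟩ := hb.2 (ε/2) (by positivity)
  refine ⟨C * D, one_le_mul_of_one_le_of_one_le hC hD, fun x y L hx hy hL hxy hyx => ?_⟩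
  have e1 := h1 x y L hx hy hL hxy hyx
  have e2 := h2 x y L hx hy hL hxy hyx
  have hL0 : 0 < L := by linarith
  have : L ^ ε = L ^ (ε/2) * L ^ (ε/2) := by rw [← Real.rpow_add hL0]; ring_nf
  calc a x * b x ≤ (C * L ^ (ε/2) * a y) * (D * L ^ (ε/2) * b y) :=
        mul_le_mul e1 e2 (hb.1 x hx).le ((ha.1 x hx).le.trans e1)
    _ = _ := by rw [this]; ring

lemma SVs.inv {a : ℝ → ℝ} (ha : SVs a) : SVs (fun t => (a t)⁻¹) := by
  refine ⟨fun t ht => inv_pos.2 (ha.1 t ht), fun ε hε => ?_⟩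
  obtain ⟨C, hC, h1⟩ := ha.2 ε hε
  refine ⟨C, hC, fun x y L hx hy hL hxy hyx => ?_⟩
  have e1 := h1 y x L hy hx hL hyx hxy
  have hax := ha.1 x hx
  have hay := ha.1 y hy
  show (a x)⁻¹ ≤ C * L ^ ε * (a y)⁻¹
  rw [← div_eq_mul_inv, inv_eq_one_div, div_le_div_iff₀ hax hay]
  linarith

lemma SVs.div {a b : ℝ → ℝ} (ha : SVs a) (hb : SVs b) : SVs (fun t => a t / b t) := by
  simpa only [div_eq_mul_inv] using ha.mul hb.inv

/-- tail norm -/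
def Bt (r : ℝ≥0∞) (d : ℝ → ℝ) (t : ℝ) : ℝ≥0∞ := LqNorm r (Ioi t) (svWgt r d)

lemma Bt_lower {r : ℝ≥0∞} (hr : 0 < r) {d : ℝ → ℝ} (hd : SVs d) :
    ∃ C : ℝ, 0 < C ∧ ∀ t, 0 < t → ENNReal.ofReal (d t) ≤ ENNReal.ofReal C * Bt r d t := by
  obtain ⟨C, hC, h⟩ := hd.2 1 one_pos
  set p := r⁻¹.toReal with hp
  have hp0 : 0 ≤ p := ENNReal.toReal_nonneg
  refine ⟨C * 2 * 2 ^ p, by positivity, fun t ht => ?_⟩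
  have h1 : LqNorm r (Ioo t (2 * t)) (fun _ => ENNReal.ofReal ((2*t) ^ (-p) * ((C*2)⁻¹ * d t)))
      ≤ Bt r d t := by
    refine le_trans ?_ (Lq_mono_set (s := Ioo t (2 * t)) (fun x hx => hx.1) _)
    refine Lq_mono measurableSet_Ioo fun u hu => ENNReal.ofReal_le_ofReal ?_
    have hu0 : 0 < u := ht.trans hu.1
    have e1 := h t u 2 ht hu0 (by norm_num) (by linarith [hu.1]) (by linarith [hu.2])
    have e2 : (C * 2)⁻¹ * d t ≤ d u := by
      rw [inv_mul_le_iff₀ (by positivity)]; simpa using e1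
    have e3 : (2*t) ^ (-p) ≤ u ^ (-p) :=
      Real.rpow_le_rpow_of_nonpos hu0 hu.2.le (by linarith)
    have := hd.1 t ht
    exact mul_le_mul e3 e2 (by positivity) (by positivity)
  rw [Lq_const hr (by linarith)] at h1
  refine le_trans ?_ (mul_le_mul_right h1 _)
  have hsub : 0 < 2 * t - t := by linarith
  rw [← ENNReal.ofReal_mul (by positivity), ← ENNReal.ofReal_mul (by positivity)]
  refine ENNReal.ofReal_le_ofReal (le_of_eq ?_)
  have ht' : t ^ p ≠ 0 := by positivity
  have h2' : (2:ℝ) ^ p ≠ 0 := by positivity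
  rw [show 2 * t - t = t by ring, Real.rpow_neg (by positivity), Real.mul_rpow (by norm_num) ht.le,
    ← hp]
  field_simp

lemma Bt_anti {r : ℝ≥0∞} {d : ℝ → ℝ} {t u : ℝ} (h : t ≤ u) : Bt r d u ≤ Bt r d t :=
  Lq_mono_set (Ioi_subset_Ioi h) _

lemma Bt_upper {r : ℝ≥0∞} (hr : 0 < r) {d : ℝ → ℝ} (hd : SVs d) {ε : ℝ} (hε : 0 < ε) :
    ∃ C : ℝ≥0∞, C ≠ ∞ ∧ ∀ t u, 0 < t → t ≤ u →
      Bt r d t ≤ C * ENNReal.ofReal ((u / t) ^ ε) * Bt r d u := by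
  obtain ⟨C, hC, h⟩ := hd.2 ε hε
  obtain ⟨C2, hC2, h2⟩ := Lq_pow_Ioi hr hε
  obtain ⟨C3, hC3, h3⟩ := Bt_lower hr hd
  set T : ℝ≥0∞ := 2 ^ r⁻¹.toReal with hT
  have hTt : T ≠ ∞ := two_rpow_ne_top r
  refine ⟨T * (ENNReal.ofReal C * C2 * ENNReal.ofReal C3 + 1), ?_, fun t u ht htu => ?_⟩
  · exact ENNReal.mul_ne_top hTt (ENNReal.add_ne_top.2
      ⟨ENNReal.mul_ne_top (ENNReal.mul_ne_top (by simp) hC2) (by simp), by simp⟩)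
  have hu : 0 < u := ht.trans_le htu
  have hdu := hd.1 u hu
  have e1 : LqNorm r (Ioc t u) (svWgt r d) ≤
      ENNReal.ofReal (C * u ^ ε * d u) * (C2 * ENNReal.ofReal (t ^ (-ε))) := by
    refine (Lq_dom hr measurableSet_Ioc (g := fun s => ENNReal.ofReal (s ^ (-ε - r⁻¹.toReal)))
      (c := ENNReal.ofReal (C * u ^ ε * d u)) (by simp) ?_).trans ?_
    · intro s hs
      have hs0 : 0 < s := ht.trans hs.1
      unfold svWgt
      rw [← ENNReal.ofReal_mul (by positivity)]
      refine ENNReal.ofReal_le_ofReal ?_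
      have e := h s u (u / s) hs0 hu ((one_le_div hs0).2 hs.2)
        (by have := (one_le_div hs0).2 hs.2; nlinarith [hs.2]) (by rw [div_mul_cancel₀ _ hs0.ne'])
      rw [Real.div_rpow hu.le hs0.le] at e
      rw [sub_eq_add_neg, Real.rpow_add hs0, Real.rpow_neg hs0.le ε]
      calc s ^ (-r⁻¹.toReal) * d s ≤ s ^ (-r⁻¹.toReal) * (C * (u ^ ε / s ^ ε) * d u) := by
            gcongr
        _ = _ := by rw [div_eq_mul_inv]; ring
    · gcongr
      exact (Lq_mono_set Ioc_subset_Ioi_self _).trans (h2 t ht)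
  have e2 : Bt r d t ≤ T * (LqNorm r (Ioc t u) (svWgt r d) + Bt r d u) := by
    refine le_trans ?_ (Lq_union _ _ _)
    rw [Ioc_union_Ioi_eq_Ioi htu]; rfl
  have e3 : ENNReal.ofReal (C * u ^ ε * d u) * (C2 * ENNReal.ofReal (t ^ (-ε))) ≤
      (ENNReal.ofReal C * C2 * ENNReal.ofReal C3) * ENNReal.ofReal ((u/t) ^ ε) * Bt r d u := by
    rw [Real.div_rpow hu.le ht.le, div_eq_mul_inv, ← Real.rpow_neg ht.le,
      ENNReal.ofReal_mul (by positivity), ENNReal.ofReal_mul (by positivity),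
      ENNReal.ofReal_mul (by positivity)]
    calc _ = ENNReal.ofReal C * ENNReal.ofReal (u ^ ε) * (C2 * ENNReal.ofReal (t ^ (-ε))) *
          ENNReal.ofReal (d u) := by ring
      _ ≤ ENNReal.ofReal C * ENNReal.ofReal (u ^ ε) * (C2 * ENNReal.ofReal (t ^ (-ε))) *
          (ENNReal.ofReal C3 * Bt r d u) := by gcongr; exact h3 u hu
      _ = _ := by ring
  have e4 : Bt r d u ≤ 1 * ENNReal.ofReal ((u/t) ^ ε) * Bt r d u := by
    rw [one_mul]
    refine le_mul_of_one_le_left zero_le ?_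
    rw [ENNReal.one_le_ofReal]
    exact Real.one_le_rpow ((one_le_div ht).2 htu) hε.le
  calc _ ≤ _ := e2
    _ ≤ T * ((ENNReal.ofReal C * C2 * ENNReal.ofReal C3) * ENNReal.ofReal ((u/t) ^ ε) * Bt r d u
        + 1 * ENNReal.ofReal ((u/t) ^ ε) * Bt r d u) := by
          gcongr
          exact e1.trans e3
    _ = _ := by ring

lemma Bt_fin {r : ℝ≥0∞} (hr : 0 < r) {d : ℝ → ℝ} (hd : SVs d) (h1 : Bt r d 1 ≠ ∞) {t : ℝ}
    (ht : 0 < t) : Bt r d t ≠ ∞ := by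
  rcases le_total 1 t with h | h
  · exact ne_top_of_le_ne_top h1 (Bt_anti h)
  · obtain ⟨C, hC, hh⟩ := Bt_upper hr hd one_pos
    exact ne_top_of_le_ne_top (ENNReal.mul_ne_top (ENNReal.mul_ne_top hC (by simp)) h1)
      (hh t 1 ht h)

lemma Bt_svs {r : ℝ≥0∞} (hr : 0 < r) {d : ℝ → ℝ} (hd : SVs d) (h1 : Bt r d 1 ≠ ∞) :
    SVs (fun t => (Bt r d t).toReal) := by
  have hpos : ∀ t, 0 < t → 0 < (Bt r d t).toReal := by
    intro t ht
    refine ENNReal.toReal_pos ?_ (Bt_fin hr hd h1 ht)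
    obtain ⟨C, hC, h⟩ := Bt_lower hr hd
    intro h0
    have := h t ht
    rw [h0, mul_zero] at this
    have h2 := hd.1 t ht
    simp at this
    linarith
  refine ⟨hpos, fun ε hε => ?_⟩
  obtain ⟨C, hC, hh⟩ := Bt_upper hr hd hε
  have key : ∀ x y : ℝ, 0 < x → x ≤ y →
      (Bt r d x).toReal ≤ C.toReal * (y / x) ^ ε * (Bt r d y).toReal := by
    intro x y hx hxy
    have hy : 0 < y := hx.trans_le hxy
    have := ENNReal.toReal_mono (ENNReal.mul_ne_top (ENNReal.mul_ne_top hC (by simp))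
      (Bt_fin hr hd h1 hy)) (hh x y hx hxy)
    rwa [ENNReal.toReal_mul, ENNReal.toReal_mul, ENNReal.toReal_ofReal (by positivity)] at this
  refine SVs.of_C hpos hε (C := C.toReal + 1) (by positivity) ?_ ?_
  · intro x y hx hxy
    have hy : 0 < y := hx.trans_le hxy
    have := hpos y hy
    refine (key x y hx hxy).trans ?_
    gcongr
    linarith
  · intro x y hx hxy
    have h3 : (Bt r d y).toReal ≤ (Bt r d x).toReal :=
      ENNReal.toReal_mono (Bt_fin hr hd h1 hx) (Bt_anti hxy)
    have h4 : 1 ≤ (y / x) ^ ε := Real.one_le_rpow ((one_le_div hx).2 hxy) hε.le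
    have h5 : 1 ≤ (C.toReal + 1) * (y / x) ^ ε :=
      one_le_mul_of_one_le_of_one_le (by linarith [C.toReal_nonneg]) h4
    exact h3.trans (le_mul_of_one_le_left (hpos x hx).le h5)

/-- power-weight comparisons on blocks -/
lemma SVs.block {a : ℝ → ℝ} (ha : SVs a) {θ : ℝ} (hθ : 0 ≤ θ) {D : ℝ} (hD : 1 ≤ D) :
    ∃ C : ℝ, 0 < C ∧ ∀ x y : ℝ, 0 < x → 0 < y → x ≤ D * y → y ≤ D * x →
      x ^ (-θ) * a x ≤ C * (y ^ (-θ) * a y) := by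
  obtain ⟨C, hC, h⟩ := ha.2 1 one_pos
  refine ⟨C * D * D ^ θ, by positivity, fun x y hx hy hxy hyx => ?_⟩
  have e1 := h x y D hx hy hD hxy hyx
  rw [Real.rpow_one] at e1
  have hD0 : 0 < D := by linarith
  have e2 : x ^ (-θ) ≤ D ^ θ * y ^ (-θ) := by
    have : D⁻¹ * y ≤ x := by rw [inv_mul_le_iff₀ hD0]; exact hyx
    have := Real.rpow_le_rpow_of_nonpos (by positivity) this (neg_nonpos.2 hθ)
    rwa [Real.mul_rpow (by positivity) hy.le, Real.inv_rpow hD0.le, Real.rpow_neg hD0.le, inv_inv]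
      at this
  have := ha.1 x hx
  calc x ^ (-θ) * a x ≤ (D ^ θ * y ^ (-θ)) * (C * D * a y) := mul_le_mul e2 e1 this.le (by positivity)
    _ = _ := by ring

lemma rho_upper {c : ℝ → ℝ} (hc : SVs c) (θ₁ : ℝ) {ε : ℝ} (hε : 0 < ε) :
    ∃ C : ℝ, 1 ≤ C ∧ ∀ t u : ℝ, 0 < t → t ≤ u →
      u ^ θ₁ / c u ≤ C * (u / t) ^ (θ₁ + ε) * (t ^ θ₁ / c t) ∧
      (u / t) ^ (θ₁ - ε) * (t ^ θ₁ / c t) ≤ C * (u ^ θ₁ / c u) := by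
  obtain ⟨C, hC, h⟩ := hc.inv.2 ε hε
  refine ⟨C, hC, fun t u ht htu => ?_⟩
  have hu : 0 < u := ht.trans_le htu
  have h1 : 1 ≤ u / t := (one_le_div ht).2 htu
  have h2 : t ≤ u / t * u := by nlinarith
  have h3 : u ≤ u / t * t := by rw [div_mul_cancel₀ _ ht.ne']
  have e1 := h u t (u / t) hu ht h1 h3 h2
  have e2 := h t u (u / t) ht hu h1 h2 h3
  have h0 : 0 < u / t := by positivity
  have hct := hc.inv.1 t ht
  have hcu := hc.inv.1 u hu
  have ht1 : (0:ℝ) < t ^ θ₁ := by positivity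
  have e3 : u ^ θ₁ = (u / t) ^ θ₁ * t ^ θ₁ := by
    rw [← Real.mul_rpow (by positivity) ht.le, div_mul_cancel₀ _ ht.ne']
  simp only [div_eq_mul_inv (u ^ θ₁), div_eq_mul_inv (t ^ θ₁)]
  constructor
  · rw [e3, Real.rpow_add h0]
    calc (u / t) ^ θ₁ * t ^ θ₁ * (c u)⁻¹ ≤ (u / t) ^ θ₁ * t ^ θ₁ * (C * (u / t) ^ ε * (c t)⁻¹) := by
          gcongr
      _ = _ := by ring
  · rw [e3, Real.rpow_sub h0]
    calc _ ≤ (u / t) ^ θ₁ / (u / t) ^ ε * (t ^ θ₁ * (C * (u / t) ^ ε * (c u)⁻¹)) := by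
          gcongr
      _ = _ := by
          have : (u / t) ^ ε ≠ 0 := by positivity
          field_simp

lemma v_bound {c a : ℝ → ℝ} (hc : SVs c) (ha : SVs a) {θ θ₁ γ : ℝ} (hθ : 0 ≤ θ) (hθ₁ : 0 < θ₁)
    (hγ : θ * θ₁ < γ) {ρ : ℝ → ℝ} (hρ : ∀ t, ρ t = t ^ θ₁ / c t) :
    ∃ C : ℝ, 0 < C ∧ ∀ t u : ℝ, 0 < t → t ≤ u →
      (ρ t) ^ (-θ) * a (ρ t) ≤ C * (u / t) ^ γ * ((ρ u) ^ (-θ) * a (ρ u)) := by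
  set ε := (γ - θ * θ₁) / (θ + 2 * θ₁) with hεd
  have hε : 0 < ε := by apply div_pos <;> nlinarith
  obtain ⟨C, hC, h⟩ := rho_upper hc θ₁ hε
  obtain ⟨C1, hC1, h1⟩ := rho_upper hc θ₁ hθ₁
  obtain ⟨D, hD, h2⟩ := ha.2 ε hε
  refine ⟨C ^ θ * D * C1 ^ ε, by positivity, fun t u ht htu => ?_⟩
  have hu : 0 < u := ht.trans_le htu
  have hl : 1 ≤ u / t := (one_le_div ht).2 htu
  have h0 : 0 < u / t := by positivity
  obtain ⟨e1, -⟩ := h t u ht htu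
  obtain ⟨e2, e3⟩ := h1 t u ht htu
  rw [← hρ, ← hρ] at e1 e2 e3
  have hρt : 0 < ρ t := by rw [hρ]; have := hc.1 t ht; positivity
  have hρu : 0 < ρ u := by rw [hρ]; have := hc.1 u hu; positivity
  rw [sub_self, Real.rpow_zero, one_mul] at e3
  have hL : 1 ≤ C1 * (u / t) ^ (θ₁ + θ₁) :=
    one_le_mul_of_one_le_of_one_le hC1 (Real.one_le_rpow hl (by positivity))
  have e4 := h2 (ρ t) (ρ u) (C1 * (u / t) ^ (θ₁ + θ₁)) hρt hρu hL
    (e3.trans (by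
      have := Real.one_le_rpow hl (by positivity : 0 ≤ θ₁ + θ₁)
      gcongr
      nlinarith)) e2
  have e5 : (ρ t) ^ (-θ) ≤ C ^ θ * (u / t) ^ ((θ₁ + ε) * θ) * (ρ u) ^ (-θ) := by
    rw [Real.rpow_neg hρt.le, Real.rpow_neg hρu.le, ← div_eq_mul_inv, inv_eq_one_div,
      div_le_div_iff₀ (by positivity) (by positivity), one_mul]
    have := Real.rpow_le_rpow hρu.le e1 hθ
    rwa [Real.mul_rpow (by positivity) hρt.le, Real.mul_rpow (by positivity) (by positivity),
      ← Real.rpow_mul h0.le] at this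
  have hap := ha.1 _ hρt
  rw [Real.mul_rpow (by positivity) (by positivity), ← Real.rpow_mul h0.le] at e4
  have e6 : (u / t) ^ γ = (u / t) ^ ((θ₁ + ε) * θ) * (u / t) ^ ((θ₁ + θ₁) * ε) := by
    rw [← Real.rpow_add h0]
    congr 1
    have : ε * (θ + 2 * θ₁) = γ - θ * θ₁ := by
      rw [hεd, div_mul_cancel₀]; positivity
    linarith
  calc _ ≤ _ := mul_le_mul e5 e4 hap.le (by positivity)
    _ = _ := by rw [e6]; ring

/-- discrete `ℓ_r` quasi-norm on `ℤ` -/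
def lq (r : ℝ≥0∞) (G : ℤ → ℝ≥0∞) : ℝ≥0∞ :=
  if r = ∞ then ⨆ k, G k else (∑' k, G k ^ r.toReal) ^ r⁻¹.toReal

lemma lq_const_mul {r : ℝ≥0∞} (hr : 0 < r) (c : ℝ≥0∞) (G : ℤ → ℝ≥0∞) :
    lq r (fun k => c * G k) = c * lq r G := by
  unfold lq
  split_ifs with h
  · exact (ENNReal.mul_iSup ..).symm
  · obtain ⟨h1, h2⟩ := qinv hr h
    simp_rw [ENNReal.mul_rpow_of_nonneg _ _ h1.le]
    rw [ENNReal.tsum_mul_left, ENNReal.mul_rpow_of_nonneg _ _ ENNReal.toReal_nonneg, h2,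
      ENNReal.rpow_rpow_inv h1.ne']

lemma lq_mono {r : ℝ≥0∞} {F G : ℤ → ℝ≥0∞} (h : ∀ k, F k ≤ G k) : lq r F ≤ lq r G := by
  unfold lq
  split_ifs with h'
  · exact iSup_mono h
  · refine ENNReal.rpow_le_rpow (ENNReal.tsum_le_tsum fun k => ?_) ENNReal.toReal_nonneg
    exact ENNReal.rpow_le_rpow (h k) ENNReal.toReal_nonneg

lemma lq_dom {r : ℝ≥0∞} (hr : 0 < r) {c : ℝ≥0∞} {F G : ℤ → ℝ≥0∞} (h : ∀ k, F k ≤ c * G k) :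
    lq r F ≤ c * lq r G := (lq_mono h).trans (lq_const_mul hr c G).le

lemma lq_hardy {r : ℝ≥0∞} (hr : 0 < r) {l : ℝ≥0∞} (hl : l < 1) :
    ∃ C : ℝ≥0∞, C ≠ ∞ ∧ ∀ y : ℤ → ℝ≥0∞,
      lq r (fun n => ⨆ m : ℕ, l ^ m * y (n + m)) ≤ C * lq r y := by
  by_cases h : r = ∞
  · refine ⟨1, by simp, fun y => ?_⟩
    simp only [lq, h, if_true, one_mul]
    refine iSup_le fun n => iSup_le fun m => ?_
    refine le_trans ?_ (le_iSup y (n + m))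
    exact mul_le_of_le_one_left zero_le (pow_le_one' hl.le m)
  · obtain ⟨h1, h2⟩ := qinv hr h
    have hl' : l ^ r.toReal < 1 := ENNReal.rpow_lt_one hl h1
    refine ⟨((1 - l ^ r.toReal)⁻¹) ^ r⁻¹.toReal, ?_, fun y => ?_⟩
    · refine ENNReal.rpow_ne_top_of_nonneg ENNReal.toReal_nonneg ?_
      exact ENNReal.inv_ne_top.2 (tsub_pos_of_lt hl').ne'
    · simp only [lq, h, if_false]
      rw [← ENNReal.mul_rpow_of_nonneg _ _ ENNReal.toReal_nonneg]
      refine ENNReal.rpow_le_rpow ?_ ENNReal.toReal_nonneg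
      calc ∑' n : ℤ, (⨆ m : ℕ, l ^ m * y (n + m)) ^ r.toReal
          ≤ ∑' n : ℤ, ∑' m : ℕ, (l ^ r.toReal) ^ m * y (n + m) ^ r.toReal := by
            refine ENNReal.tsum_le_tsum fun n => ?_
            rw [← ENNReal.le_rpow_inv_iff h1]
            refine iSup_le fun m => ?_
            rw [ENNReal.le_rpow_inv_iff h1]
            refine le_trans (le_of_eq ?_) (ENNReal.le_tsum m)
            rw [ENNReal.mul_rpow_of_nonneg _ _ h1.le, ← ENNReal.rpow_natCast,
              ← ENNReal.rpow_natCast, ← ENNReal.rpow_mul, ← ENNReal.rpow_mul, mul_comm (m:ℝ)]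
        _ = ∑' m : ℕ, (l ^ r.toReal) ^ m * ∑' n : ℤ, y n ^ r.toReal := by
            rw [ENNReal.tsum_comm]
            congr 1; ext m
            rw [ENNReal.tsum_mul_left]
            congr 1
            exact (Equiv.addRight (m:ℤ)).tsum_eq (fun n => y n ^ r.toReal)
        _ = _ := by rw [ENNReal.tsum_mul_right, ENNReal.tsum_geometric]

/-- lacunary sequences -/
def Lac (D : ℝ) (x : ℤ → ℝ) : Prop :=
  (∀ k, 0 < x k) ∧ (∀ k, 2 * x k ≤ x (k + 1)) ∧ ∀ k, x (k + 1) ≤ D * x k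

lemma Lac.mono {D : ℝ} {x : ℤ → ℝ} (h : Lac D x) : Monotone x :=
  monotone_int_of_le_succ fun k => by linarith [h.1 k, h.2.1 k]

lemma Lac.pow_le {D : ℝ} {x : ℤ → ℝ} (h : Lac D x) (k : ℤ) (n : ℕ) : 2 ^ n * x k ≤ x (k + n) := by
  induction n with
  | zero => simp
  | succ n ih =>
    have := h.2.1 (k + n)
    push_cast
    rw [← add_assoc, pow_succ]
    linarith

lemma Lac.cover {D : ℝ} {x : ℤ → ℝ} (h : Lac D x) {u : ℝ} (hu : 0 < u) :
    ∃ k, x k ≤ u ∧ u < x (k + 1) := by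
  have h0 := h.1 0
  obtain ⟨n, hn⟩ := pow_unbounded_of_one_lt (u / x 0) (by norm_num : (1:ℝ) < 2)
  obtain ⟨m, hm⟩ := pow_unbounded_of_one_lt (x 0 / u) (by norm_num : (1:ℝ) < 2)
  rw [div_lt_iff₀ h0] at hn
  rw [div_lt_iff₀ hu] at hm
  have h1 : u < x n := by simpa using hn.trans_le (h.pow_le 0 n)
  have h2 : x (-m) ≤ u := by
    have e := h.pow_le (-m) m
    rw [neg_add_cancel] at e
    have : (2:ℝ) ^ m * x (-m) ≤ 2 ^ m * u := by linarith
    exact le_of_mul_le_mul_left this (by positivity)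
  obtain ⟨k, hk, hmax⟩ := Int.exists_greatest_of_bdd (P := fun k => x k ≤ u)
    ⟨n, fun z hz => by
      by_contra hc
      push Not at hc
      linarith [h.mono hc.le]⟩ ⟨-m, h2⟩
  refine ⟨k, hk, ?_⟩
  by_contra hc
  push Not at hc
  have := hmax (k+1) hc
  omega

lemma disc_upper {r : ℝ≥0∞} (hr : 0 < r) {D : ℝ} {x : ℤ → ℝ} (hx : Lac D x) :
    ∃ C : ℝ≥0∞, C ≠ ∞ ∧ ∀ (F : ℝ → ℝ≥0∞) (G : ℤ → ℝ≥0∞),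
      (∀ k, ∀ u ∈ Ico (x k) (x (k+1)), F u ≤ ENNReal.ofReal (u ^ (-r⁻¹.toReal)) * G k) →
      LqNorm r (Ioi 0) F ≤ C * lq r G := by
  have hcov : Ioi (0:ℝ) ⊆ ⋃ k, Ico (x k) (x (k+1)) := by
    intro u hu
    obtain ⟨k, hk⟩ := hx.cover hu
    exact mem_iUnion.2 ⟨k, hk⟩
  by_cases h : r = ∞
  · refine ⟨1, by simp, fun F G hF => ?_⟩
    simp only [lq, LqNorm, h, if_true, one_mul]
    refine essSup_le_of_ae_le _ ((ae_restrict_iff' measurableSet_Ioi).2 (Eventually.of_forall ?_))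
    intro u hu
    obtain ⟨k, hk⟩ := mem_iUnion.1 (hcov hu)
    refine le_trans ?_ (le_iSup G k)
    simpa [h] using hF k u hk
  · obtain ⟨h1, h2⟩ := qinv hr h
    refine ⟨ENNReal.ofReal D ^ r⁻¹.toReal, by finiteness, fun F G hF => ?_⟩
    simp only [lq, LqNorm, h, if_false]
    rw [← ENNReal.mul_rpow_of_nonneg _ _ ENNReal.toReal_nonneg]
    refine ENNReal.rpow_le_rpow ?_ ENNReal.toReal_nonneg
    refine (lintegral_mono_set hcov).trans ((lintegral_iUnion_le _ _).trans ?_)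
    rw [← ENNReal.tsum_mul_left]
    refine ENNReal.tsum_le_tsum fun k => ?_
    have hk := hx.1 k
    calc ∫⁻ u in Ico (x k) (x (k+1)), F u ^ r.toReal
        ≤ ∫⁻ u in Ico (x k) (x (k+1)), ENNReal.ofReal ((x k)⁻¹) * G k ^ r.toReal := by
          refine setLIntegral_mono' measurableSet_Ico fun u hu => ?_
          refine (ENNReal.rpow_le_rpow (hF k u hu) h1.le).trans ?_
          rw [ENNReal.mul_rpow_of_nonneg _ _ h1.le]
          gcongr
          have hu0 : 0 < u := hk.trans_le hu.1
          have := ofReal_rpow_pow hr h (e := 0) hu0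
          rw [zero_sub, zero_mul, zero_sub, Real.rpow_neg_one] at this
          rw [this]
          refine ENNReal.ofReal_le_ofReal ?_
          gcongr
          exact hu.1
      _ = ENNReal.ofReal ((x k)⁻¹ * (x (k+1) - x k)) * G k ^ r.toReal := by
          rw [lintegral_const, Measure.restrict_apply MeasurableSet.univ, univ_inter,
            Real.volume_Ico, ENNReal.ofReal_mul (by positivity)]
          ring
      _ ≤ _ := by
          gcongr
          rw [inv_mul_le_iff₀ hk]
          linarith [hx.2.2 k]

lemma disc_lower {r : ℝ≥0∞} (hr : 0 < r) {D : ℝ} {x : ℤ → ℝ} (hx : Lac D x) :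
    ∃ C : ℝ≥0∞, C ≠ ∞ ∧ ∀ (F : ℝ → ℝ≥0∞) (G : ℤ → ℝ≥0∞),
      (∀ k, ∀ u ∈ Ico (x k) (x (k+1)), ENNReal.ofReal (u ^ (-r⁻¹.toReal)) * G k ≤ F u) →
      lq r G ≤ C * LqNorm r (Ioi 0) F := by
  have hsub : ∀ k, Ico (x k) (x (k+1)) ⊆ Ioi (0:ℝ) := fun k u hu => (hx.1 k).trans_le hu.1
  have hlt : ∀ k, x k < x (k+1) := fun k => by linarith [hx.1 k, hx.2.1 k]
  by_cases h : r = ∞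
  · refine ⟨1, by simp, fun F G hF => ?_⟩
    simp only [lq, LqNorm, h, if_true, one_mul]
    refine iSup_le fun k => ?_
    have hv : (volume.restrict (Ico (x k) (x (k+1)))) ≠ 0 := by
      intro h
      have := congrArg (fun m : Measure ℝ => m univ) h
      simp at this
      linarith [hlt k]
    calc G k = essSup (fun _ => G k) (volume.restrict (Ico (x k) (x (k+1)))) :=
          (essSup_const _ hv).symm
      _ ≤ essSup F (volume.restrict (Ico (x k) (x (k+1)))) :=
          essSup_mono_ae ((ae_restrict_iff' measurableSet_Ico).2 (Eventually.of_forall fun u hu => by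
            simpa [h] using hF k u hu))
      _ ≤ _ := essSup_mono_measure' (Measure.restrict_mono (hsub k) le_rfl)
  · obtain ⟨h1, h2⟩ := qinv hr h
    refine ⟨2 ^ r⁻¹.toReal, two_rpow_ne_top r, fun F G hF => ?_⟩
    simp only [lq, LqNorm, h, if_false]
    rw [← ENNReal.mul_rpow_of_nonneg _ _ ENNReal.toReal_nonneg]
    refine ENNReal.rpow_le_rpow ?_ ENNReal.toReal_nonneg
    have hdis : Pairwise (Function.onFun Disjoint fun k => Ico (x k) (x (k+1))) := by
      have := hx.mono.pairwise_disjoint_on_Ico_succ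
      simpa using this
    calc ∑' k, G k ^ r.toReal ≤ ∑' k, 2 * ∫⁻ u in Ico (x k) (x (k+1)), F u ^ r.toReal := by
          refine ENNReal.tsum_le_tsum fun k => ?_
          have hk := hx.1 k
          have hk1 := hx.1 (k+1)
          have : ENNReal.ofReal ((x (k+1))⁻¹ * (x (k+1) - x k)) * G k ^ r.toReal ≤
              ∫⁻ u in Ico (x k) (x (k+1)), F u ^ r.toReal := by
            calc _ = ∫⁻ u in Ico (x k) (x (k+1)), ENNReal.ofReal ((x (k+1))⁻¹) * G k ^ r.toReal := by
                  rw [lintegral_const, Measure.restrict_apply MeasurableSet.univ, univ_inter,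
                    Real.volume_Ico, ENNReal.ofReal_mul (by positivity)]
                  ring
              _ ≤ _ := by
                  refine setLIntegral_mono' measurableSet_Ico fun u hu => ?_
                  refine le_trans ?_ (ENNReal.rpow_le_rpow (hF k u hu) h1.le)
                  rw [ENNReal.mul_rpow_of_nonneg _ _ h1.le]
                  gcongr
                  have hu0 : 0 < u := hk.trans_le hu.1
                  have := ofReal_rpow_pow hr h (e := 0) hu0
                  rw [zero_sub, zero_mul, zero_sub, Real.rpow_neg_one] at this
                  rw [this]
                  refine ENNReal.ofReal_le_ofReal ?_
                  gcongr
                  exact hu.2.le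
          refine le_trans ?_ (mul_le_mul_right this 2)
          rw [← mul_assoc]
          refine le_mul_of_one_le_left zero_le ?_
          rw [show (2:ℝ≥0∞) = ENNReal.ofReal 2 by simp, ← ENNReal.ofReal_mul (by norm_num),
            ENNReal.one_le_ofReal]
          have : (1/2 : ℝ) ≤ (x (k+1))⁻¹ * (x (k+1) - x k) := by
            rw [← div_eq_inv_mul, le_div_iff₀ hk1]
            linarith [hx.2.1 k]
          linarith
      _ = 2 * ∫⁻ u in ⋃ k, Ico (x k) (x (k+1)), F u ^ r.toReal := by
          rw [ENNReal.tsum_mul_left, lintegral_iUnion (fun k => measurableSet_Ico) hdis]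
      _ ≤ _ := by
          gcongr
          exact iUnion_subset hsub

/-! ### K-functional -/

lemma Kf_mono (N₀ N₁ : E → ℝ≥0∞) {t u : ℝ} (h : t ≤ u) (f : E) : Kf N₀ N₁ t f ≤ Kf N₀ N₁ u f := by
  refine iInf_mono fun g => ?_
  gcongr

lemma Kf_scale (N₀ N₁ : E → ℝ≥0∞) {t u D : ℝ} (hD : 1 ≤ D) (h : u ≤ D * t) (f : E) :
    Kf N₀ N₁ u f ≤ ENNReal.ofReal D * Kf N₀ N₁ t f := by
  unfold Kf
  rw [ENNReal.mul_iInf (by simp)]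
  refine iInf_mono fun g => ?_
  rw [mul_add, ← mul_assoc, ← ENNReal.ofReal_mul (by linarith)]
  gcongr
  refine le_mul_of_one_le_left zero_le ?_
  rwa [ENNReal.one_le_ofReal]

lemma Kf_le_one (A₀ : QuasiBanach E) (N₁ : E → ℝ≥0∞) (t : ℝ) (f : E) :
    Kf A₀.N N₁ t f ≤ ENNReal.ofReal t * N₁ f := by
  refine (iInf_le _ 0).trans ?_
  simp [A₀.zero]

lemma QuasiBanach.neg (A : QuasiBanach E) (x : E) : A.N (-x) = A.N x := by
  have := A.smul (-1) x
  simpa using this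

lemma Kf_sub_le (A₀ : QuasiBanach E) (N₁ : E → ℝ≥0∞) {Q : ℝ≥0∞} (hQ1 : 1 ≤ Q) (hQ : Q ≠ ∞)
    (hq : ∀ x y, A₀.N (x + y) ≤ Q * (A₀.N x + A₀.N y)) (t : ℝ) (f g : E) :
    Kf A₀.N N₁ t (f - g) ≤ Q * (A₀.N g + Kf A₀.N N₁ t f) := by
  conv_rhs => unfold Kf
  rw [ENNReal.add_iInf, ENNReal.mul_iInf (by simp [hQ])]
  refine le_iInf fun h => ?_
  refine (iInf_le _ (h - g)).trans ?_
  have e1 : f - g - (h - g) = f - h := by abel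
  have e2 : A₀.N (h - g) ≤ Q * (A₀.N h + A₀.N g) := by
    rw [sub_eq_add_neg, ← A₀.neg g]; exact hq _ _
  rw [e1]
  calc _ ≤ Q * (A₀.N h + A₀.N g) + Q * (ENNReal.ofReal t * N₁ (f - h)) := by
        refine add_le_add e2 ?_
        exact le_mul_of_one_le_left zero_le hQ1
    _ = _ := by ring

lemma Kf_le_add (A₀ : QuasiBanach E) (N₁ : E → ℝ≥0∞) {Q : ℝ≥0∞} (hQ1 : 1 ≤ Q) (hQ : Q ≠ ∞)
    (hq : ∀ x y, A₀.N (x + y) ≤ Q * (A₀.N x + A₀.N y)) (t : ℝ) (f g : E) :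
    Kf A₀.N N₁ t f ≤ Q * (A₀.N g + Kf A₀.N N₁ t (f - g)) := by
  have := Kf_sub_le A₀ N₁ hQ1 hQ hq t (f - g) (-g)
  rwa [sub_neg_eq_add, sub_add_cancel, A₀.neg] at this

lemma inner_low {q : ℝ≥0∞} (hq : 0 < q) {a : ℝ → ℝ} (ha : SVs a) {θ₁ : ℝ} (hθ₁ : 0 < θ₁) :
    ∃ κ : ℝ, 0 < κ ∧ ∀ (N₀ N₁ : E → ℝ≥0∞) (t : ℝ) (h : E), 0 < t →
      ENNReal.ofReal (κ * (t ^ (-θ₁) * a t)) * Kf N₀ N₁ t h ≤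
      LqNorm q (Ioo (t / 2) t)
        (fun u => ENNReal.ofReal (u ^ (-θ₁ - q⁻¹.toReal) * a u) * Kf N₀ N₁ u h) := by
  obtain ⟨C, hC, hh⟩ := ha.2 1 one_pos
  set p := q⁻¹.toReal with hp
  have hp0 : 0 ≤ p := ENNReal.toReal_nonneg
  set κ0 : ℝ := (2⁻¹) ^ p * (C * 2)⁻¹ * 2⁻¹ with hκ0
  refine ⟨κ0, by positivity, fun N₀ N₁ t h ht => ?_⟩
  have e1 : LqNorm q (Ioo (t / 2) t) (fun _ => ENNReal.ofReal (t ^ (-θ₁ - p) * ((C*2)⁻¹ * a t)) *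
      (ENNReal.ofReal 2⁻¹ * Kf N₀ N₁ t h)) ≤ LqNorm q (Ioo (t / 2) t)
        (fun u => ENNReal.ofReal (u ^ (-θ₁ - p) * a u) * Kf N₀ N₁ u h) := by
    refine Lq_mono measurableSet_Ioo fun u hu => ?_
    have hu0 : 0 < u := by linarith [hu.1]
    have := ha.1 t ht
    refine mul_le_mul' (ENNReal.ofReal_le_ofReal ?_) ?_
    · have e1 := hh t u 2 ht hu0 (by norm_num) (by linarith [hu.1]) (by linarith [hu.2])
      have e2 : (C * 2)⁻¹ * a t ≤ a u := by
        rw [inv_mul_le_iff₀ (by positivity)]; simpa using e1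
      have e3 : t ^ (-θ₁ - p) ≤ u ^ (-θ₁ - p) :=
        Real.rpow_le_rpow_of_nonpos hu0 hu.2.le (by linarith)
      exact mul_le_mul e3 e2 (by positivity) (by positivity)
    · calc _ ≤ ENNReal.ofReal 2⁻¹ * (ENNReal.ofReal 2 * Kf N₀ N₁ u h) := by
            gcongr
            exact Kf_scale _ _ (by norm_num) (by linarith [hu.1]) _
        _ = _ := by
            rw [← mul_assoc, ← ENNReal.ofReal_mul (by norm_num)]
            norm_num
  rw [Lq_const hq (by linarith)] at e1
  refine le_trans (le_of_eq ?_) e1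
  have := ha.1 t ht
  have hsub : t - t / 2 = t * 2⁻¹ := by ring
  have key : κ0 * (t ^ (-θ₁) * a t) =
      (t * 2⁻¹) ^ p * (t ^ (-θ₁ - p) * ((C * 2)⁻¹ * a t)) * 2⁻¹ := by
    rw [hκ0, Real.mul_rpow ht.le (by norm_num), Real.rpow_sub ht]
    have : t ^ p ≠ 0 := by positivity
    field_simp
  rw [key, hsub, ENNReal.ofReal_mul (by positivity), ENNReal.ofReal_mul (by positivity)]
  ring

lemma X_low {q r : ℝ≥0∞} (hq : 0 < q) (hr : 0 < r) {a b : ℝ → ℝ} (ha : SVs a)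
    (hb : SVs b) {θ₁ : ℝ} (hθ₁ : 0 < θ₁) (hfin : Bt r (fun s => b s / a s) 1 ≠ ∞)
    {ρ : ℝ → ℝ} (hρ : ∀ t, ρ t = t ^ θ₁ / (a t * (Bt r (fun s => b s / a s) t).toReal)) :
    ∃ C : ℝ≥0∞, C ≠ ∞ ∧ ∀ (N₀ N₁ : E → ℝ≥0∞) (t : ℝ) (h : E), 0 < t →
      Kf N₀ N₁ t h ≤ C * (ENNReal.ofReal (ρ t) * normL N₀ N₁ θ₁ r q b a h) := by
  obtain ⟨κ, hκ, hh⟩ := inner_low (E := E) hq ha hθ₁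
  refine ⟨ENNReal.ofReal κ⁻¹, by simp, fun N₀ N₁ t h ht => ?_⟩
  have hd := hb.div ha
  have hBf := Bt_fin hr hd hfin ht
  have hBp : 0 < (Bt r (fun s => b s / a s) t).toReal := (Bt_svs hr hd hfin).1 t ht
  have hat := ha.1 t ht
  set I := ENNReal.ofReal (κ * (t ^ (-θ₁) * a t)) * Kf N₀ N₁ t h with hI
  have e1 : I * Bt r (fun s => b s / a s) t ≤ normL N₀ N₁ θ₁ r q b a h := by
    refine (Lq_const_mul_ge hr _ _ _).trans ?_
    unfold normL
    refine le_trans ?_ (Lq_mono_set (s := Ioi t) (fun s hs => ht.trans hs) _)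
    refine Lq_mono measurableSet_Ioi fun s hs => ?_
    rw [mul_comm]
    unfold svWgt
    gcongr
    refine (hh N₀ N₁ t h ht).trans (Lq_mono_set ?_ _)
    intro u hu
    exact ⟨by linarith [hu.1], lt_trans hu.2 hs⟩
  calc Kf N₀ N₁ t h = ENNReal.ofReal κ⁻¹ * (ENNReal.ofReal (ρ t) *
        (I * Bt r (fun s => b s / a s) t)) := by
        rw [hI, ← ENNReal.ofReal_toReal hBf]
        set B := (Bt r (fun s => b s / a s) t).toReal with hB
        have hB0 : B ≠ 0 := hBp.ne'
        have : ENNReal.ofReal κ⁻¹ * (ENNReal.ofReal (ρ t) *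
            (ENNReal.ofReal (κ * (t ^ (-θ₁) * a t)) * Kf N₀ N₁ t h * ENNReal.ofReal B)) =
          (ENNReal.ofReal κ⁻¹ * ENNReal.ofReal (ρ t) *
            ENNReal.ofReal (κ * (t ^ (-θ₁) * a t)) * ENNReal.ofReal B) * Kf N₀ N₁ t h := by ring
        have hρp : 0 < ρ t := by rw [hρ]; positivity
        rw [this, ← ENNReal.ofReal_mul (by positivity), ← ENNReal.ofReal_mul (by positivity),
          ← ENNReal.ofReal_mul (by positivity), hρ, Real.rpow_neg ht.le, ← hB]
        have ht1 : t ^ θ₁ ≠ 0 := by positivity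
        have : κ⁻¹ * (t ^ θ₁ / (a t * B)) * (κ * ((t ^ θ₁)⁻¹ * a t)) * B = 1 := by
          field_simp
        rw [this, ENNReal.ofReal_one, one_mul]
    _ ≤ _ := by gcongr

lemma SVs.le_pow {a : ℝ → ℝ} (ha : SVs a) {ε : ℝ} (hε : 0 < ε) :
    ∃ C : ℝ, 0 < C ∧ ∀ u s : ℝ, 0 < u → u ≤ s →
      a u ≤ C * (s ^ ε * u ^ (-ε)) * a s ∧ a s ≤ C * (s ^ ε * u ^ (-ε)) * a u := by
  obtain ⟨C, hC, h⟩ := ha.2 ε hε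
  refine ⟨C, by linarith, fun u s hu hus => ?_⟩
  have hs : 0 < s := hu.trans_le hus
  have h1 : 1 ≤ s / u := (one_le_div hu).2 hus
  have h2 : u ≤ s / u * s := by nlinarith
  have h3 : s ≤ s / u * u := by rw [div_mul_cancel₀ _ hu.ne']
  have e : (s / u) ^ ε = s ^ ε * u ^ (-ε) := by
    rw [Real.div_rpow hs.le hu.le, Real.rpow_neg hu.le, div_eq_mul_inv]
  rw [← e]
  exact ⟨h u s _ hu hs h1 h2 h3, h s u _ hs hu h1 h3 h2⟩

lemma inner1 {q : ℝ≥0∞} (hq : 0 < q) {a : ℝ → ℝ} (ha : SVs a) {θ₁ : ℝ} (hθ₁' : θ₁ < 1) :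
    ∃ C : ℝ≥0∞, C ≠ ∞ ∧ ∀ (φ : ℝ → ℝ≥0∞) (κ : ℝ≥0∞) (t s : ℝ), κ ≠ ∞ → 0 < s → s ≤ t →
      (∀ u, 0 < u → u ≤ t → φ u ≤ ENNReal.ofReal (u / t) * κ) →
      LqNorm q (Ioc 0 s) (fun u => ENNReal.ofReal (u ^ (-θ₁ - q⁻¹.toReal) * a u) * φ u) ≤
        C * (ENNReal.ofReal (s ^ (1 - θ₁) * a s / t) * κ) := by
  set ε := (1 - θ₁) / 2 with hεd
  have hε : 0 < ε := by rw [hεd]; linarith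
  obtain ⟨C, hC, h⟩ := ha.le_pow hε
  obtain ⟨C2, hC2, h2⟩ := Lq_pow_Ioc hq hε
  refine ⟨ENNReal.ofReal C * C2, by finiteness, fun φ κ t s hκ hs hst hφ => ?_⟩
  have ht : 0 < t := hs.trans_le hst
  have has := ha.1 s hs
  refine (Lq_dom hq measurableSet_Ioc (c := ENNReal.ofReal (C * s ^ ε * a s / t) * κ)
    (g := fun u => ENNReal.ofReal (u ^ (ε - q⁻¹.toReal))) (by finiteness) ?_).trans ?_
  · intro u hu
    have hu0 : 0 < u := hu.1
    have hau := ha.1 u hu0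
    calc _ ≤ ENNReal.ofReal (u ^ (-θ₁ - q⁻¹.toReal) * a u) * (ENNReal.ofReal (u / t) * κ) := by
          gcongr
          exact hφ u hu0 (hu.2.trans hst)
      _ = ENNReal.ofReal (u ^ (-θ₁ - q⁻¹.toReal) * a u * (u / t)) * κ := by
          rw [ENNReal.ofReal_mul (p := _ * a u) (by positivity)]; ring
      _ ≤ ENNReal.ofReal (C * s ^ ε * a s / t * u ^ (ε - q⁻¹.toReal)) * κ := by
          refine mul_le_mul' (ENNReal.ofReal_le_ofReal ?_) le_rfl
          calc _ ≤ u ^ (-θ₁ - q⁻¹.toReal) * (C * (s ^ ε * u ^ (-ε)) * a s) * (u / t) :=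
                mul_le_mul_of_nonneg_right (mul_le_mul_of_nonneg_left (h u s hu0 hu.2).1
                  (by positivity)) (by positivity)
            _ = C * s ^ ε * a s / t * (u ^ (-θ₁ - q⁻¹.toReal) * u ^ (-ε) * u ^ (1:ℝ)) := by
                rw [Real.rpow_one]; ring
            _ = _ := by
                rw [← Real.rpow_add hu0, ← Real.rpow_add hu0]
                congr 2
                rw [hεd]; ring
      _ = _ := by
          rw [ENNReal.ofReal_mul (p := _ / t) (by positivity)]; ring
  · calc _ ≤ ENNReal.ofReal (C * s ^ ε * a s / t) * κ * (C2 * ENNReal.ofReal (s ^ ε)) := by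
          gcongr
          exact h2 s hs
      _ = C2 * (ENNReal.ofReal (C * s ^ ε * a s / t) * ENNReal.ofReal (s ^ ε)) * κ := by ring
      _ = C2 * (ENNReal.ofReal C * ENNReal.ofReal (s ^ (1 - θ₁) * a s / t)) * κ := by
          rw [← ENNReal.ofReal_mul (by positivity), ← ENNReal.ofReal_mul (by positivity)]
          have : s ^ (1 - θ₁) = s ^ ε * s ^ ε := by
            rw [← Real.rpow_add hs]; congr 1; rw [hεd]; ring
          rw [this]
          congr 3
          ring
      _ = _ := by ring

lemma inner2 {q : ℝ≥0∞} (hq : 0 < q) {a : ℝ → ℝ} (ha : SVs a) {θ₁ γ : ℝ} (hγ : γ < θ₁) :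
    ∃ C : ℝ≥0∞, C ≠ ∞ ∧ ∀ (φ : ℝ → ℝ≥0∞) (κ : ℝ≥0∞) (t : ℝ), κ ≠ ∞ → 0 < t →
      (∀ u, t < u → φ u ≤ ENNReal.ofReal ((u / t) ^ γ) * κ) →
      LqNorm q (Ioi t) (fun u => ENNReal.ofReal (u ^ (-θ₁ - q⁻¹.toReal) * a u) * φ u) ≤
        C * (ENNReal.ofReal (t ^ (-θ₁) * a t) * κ) := by
  set ε := (θ₁ - γ) / 2 with hεd
  have hε : 0 < ε := by rw [hεd]; linarith
  obtain ⟨C, hC, h⟩ := ha.le_pow hε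
  obtain ⟨C2, hC2, h2⟩ := Lq_pow_Ioi hq hε
  refine ⟨ENNReal.ofReal C * C2, by finiteness, fun φ κ t hκ ht hφ => ?_⟩
  have hat := ha.1 t ht
  refine (Lq_dom hq measurableSet_Ioi (c := ENNReal.ofReal (C * (t ^ (-γ) * t ^ (-ε)) * a t) * κ)
    (g := fun u => ENNReal.ofReal (u ^ (-ε - q⁻¹.toReal))) (by finiteness) ?_).trans ?_
  · intro u hu
    have hu0 : 0 < u := ht.trans hu
    have hau := ha.1 u hu0
    calc _ ≤ ENNReal.ofReal (u ^ (-θ₁ - q⁻¹.toReal) * a u) * (ENNReal.ofReal ((u / t) ^ γ) * κ) := by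
          gcongr
          exact hφ u hu
      _ = ENNReal.ofReal (u ^ (-θ₁ - q⁻¹.toReal) * a u * (u / t) ^ γ) * κ := by
          rw [ENNReal.ofReal_mul (p := _ * a u) (by positivity)]; ring
      _ ≤ ENNReal.ofReal (C * (t ^ (-γ) * t ^ (-ε)) * a t * u ^ (-ε - q⁻¹.toReal)) * κ := by
          refine mul_le_mul' (ENNReal.ofReal_le_ofReal ?_) le_rfl
          calc _ ≤ u ^ (-θ₁ - q⁻¹.toReal) * (C * (u ^ ε * t ^ (-ε)) * a t) * (u / t) ^ γ :=
                mul_le_mul_of_nonneg_right (mul_le_mul_of_nonneg_left (h t u ht (le_of_lt hu)).2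
                  (by positivity)) (by positivity)
            _ = C * (t ^ (-γ) * t ^ (-ε)) * a t * (u ^ (-θ₁ - q⁻¹.toReal) * u ^ ε * u ^ γ) := by
                rw [Real.div_rpow hu0.le ht.le, Real.rpow_neg ht.le γ, div_eq_mul_inv]; ring
            _ = _ := by
                rw [← Real.rpow_add hu0, ← Real.rpow_add hu0]
                congr 2
                rw [hεd]; ring
      _ = _ := by
          rw [ENNReal.ofReal_mul (p := _ * a t) (by positivity)]; ring
  · calc _ ≤ ENNReal.ofReal (C * (t ^ (-γ) * t ^ (-ε)) * a t) * κ *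
            (C2 * ENNReal.ofReal (t ^ (-ε))) := by
          gcongr
          exact h2 t ht
      _ = C2 * (ENNReal.ofReal (C * (t ^ (-γ) * t ^ (-ε)) * a t) *
            ENNReal.ofReal (t ^ (-ε))) * κ := by ring
      _ = C2 * (ENNReal.ofReal C * ENNReal.ofReal (t ^ (-θ₁) * a t)) * κ := by
          rw [← ENNReal.ofReal_mul (by positivity), ← ENNReal.ofReal_mul (by positivity)]
          have : t ^ (-θ₁) = t ^ (-γ) * t ^ (-ε) * t ^ (-ε) := by
            rw [← Real.rpow_add ht, ← Real.rpow_add ht]; congr 1; rw [hεd]; ring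
          rw [this]
          congr 3
          ring
      _ = _ := by ring

lemma X_up {q r : ℝ≥0∞} (hq : 0 < q) (hr : 0 < r) {a b : ℝ → ℝ} (ha : SVs a)
    (hb : SVs b) {θ₁ γ : ℝ} (hθ₁ : 0 < θ₁) (hθ₁' : θ₁ < 1) (hγ : γ < θ₁)
    (hfin : Bt r (fun s => b s / a s) 1 ≠ ∞)
    {ρ : ℝ → ℝ} (hρ : ∀ t, ρ t = t ^ θ₁ / (a t * (Bt r (fun s => b s / a s) t).toReal)) :
    ∃ C : ℝ≥0∞, C ≠ ∞ ∧ ∀ (N₀ N₁ : E → ℝ≥0∞) (t : ℝ) (h : E) (κ : ℝ≥0∞), κ ≠ ∞ → 0 < t →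
      (∀ u, 0 < u → u ≤ t → Kf N₀ N₁ u h ≤ ENNReal.ofReal (u / t) * κ) →
      (∀ u, t < u → Kf N₀ N₁ u h ≤ ENNReal.ofReal ((u / t) ^ γ) * κ) →
      ENNReal.ofReal (ρ t) * normL N₀ N₁ θ₁ r q b a h ≤ C * κ := by
  obtain ⟨C1, hC1, h1⟩ := inner1 hq ha hθ₁'
  obtain ⟨C2, hC2, h2⟩ := inner2 hq ha hγ
  have hd := hb.div ha
  obtain ⟨C3, hC3, h3⟩ := Bt_lower hr hd
  set ε := (1 - θ₁) / 2 with hεd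
  have hε : 0 < ε := by rw [hεd]; linarith
  obtain ⟨C4, hC4, h4⟩ := hb.le_pow hε
  obtain ⟨C5, hC5, h5⟩ := Lq_pow_Ioc hr hε
  have hTq := two_rpow_ne_top q
  have hTr := two_rpow_ne_top r
  set Tq : ℝ≥0∞ := 2 ^ q⁻¹.toReal
  set Tr : ℝ≥0∞ := 2 ^ r⁻¹.toReal with hTrd
  refine ⟨Tr * (C1 * ENNReal.ofReal C4 * C5 * ENNReal.ofReal C3 + Tq * (C1 + C2)), by finiteness,
    fun N₀ N₁ t h κ hκ ht hφ1 hφ2 => ?_⟩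
  have hBf := Bt_fin hr hd hfin ht
  have hBp : 0 < (Bt r (fun s => b s / a s) t).toReal := (Bt_svs hr hd hfin).1 t ht
  have hat := ha.1 t ht
  have hbt := hb.1 t ht
  set B := Bt r (fun s => b s / a s) t with hB
  set W := ENNReal.ofReal (t ^ (-θ₁) * a t) with hW
  have hWf : W ≠ ∞ := by simp [hW]
  have ht1 : t ^ (1 - θ₁) / t = t ^ (-θ₁) := by
    rw [sub_eq_add_neg, Real.rpow_add ht, Real.rpow_one]; field_simp
  -- inner norm for large s
  have i3 : ∀ s, LqNorm q (Ioo 0 s)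
      (fun u => ENNReal.ofReal (u ^ (-θ₁ - q⁻¹.toReal) * a u) * Kf N₀ N₁ u h) ≤
      Tq * (C1 + C2) * (W * κ) := by
    intro s
    refine (Lq_mono_set (t := Ioc 0 t ∪ Ioi t) ?_ _).trans ((Lq_union _ _ _).trans ?_)
    · rw [Ioc_union_Ioi_eq_Ioi ht.le]; exact Ioo_subset_Ioi_self
    · have e1 := h1 (fun u => Kf N₀ N₁ u h) κ t t hκ ht le_rfl hφ1
      have e2 := h2 (fun u => Kf N₀ N₁ u h) κ t hκ ht hφ2
      rw [mul_div_right_comm, ht1] at e1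
      calc _ ≤ Tq * (C1 * (W * κ) + C2 * (W * κ)) := by gcongr
        _ = _ := by ring
  -- outer norm, small part
  have o1 : LqNorm r (Ioc 0 t) (fun s => ENNReal.ofReal (s ^ (-(r⁻¹.toReal)) * (b s / a s)) *
      LqNorm q (Ioo 0 s)
        (fun u => ENNReal.ofReal (u ^ (-θ₁ - q⁻¹.toReal) * a u) * Kf N₀ N₁ u h)) ≤
      C1 * ENNReal.ofReal C4 * C5 * ENNReal.ofReal C3 * (W * B * κ) := by
    refine (Lq_dom hr measurableSet_Ioc (c := C1 * ENNReal.ofReal (C4 * t ^ ε * b t / t) * κ)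
      (g := fun u => ENNReal.ofReal (u ^ (ε - r⁻¹.toReal))) (by finiteness) ?_).trans ?_
    · intro s hs
      have hs0 : 0 < s := hs.1
      have has := ha.1 s hs0
      have hbs := hb.1 s hs0
      calc _ ≤ ENNReal.ofReal (s ^ (-(r⁻¹.toReal)) * (b s / a s)) *
            (C1 * (ENNReal.ofReal (s ^ (1 - θ₁) * a s / t) * κ)) := by
            gcongr
            exact (Lq_mono_set Ioo_subset_Ioc_self _).trans
              (h1 (fun u => Kf N₀ N₁ u h) κ t s hκ hs0 hs.2 hφ1)
        _ = C1 * (ENNReal.ofReal (s ^ (-(r⁻¹.toReal)) * (b s / a s)) *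
              ENNReal.ofReal (s ^ (1 - θ₁) * a s / t)) * κ := by ring
        _ ≤ C1 * (ENNReal.ofReal (C4 * t ^ ε * b t / t) *
              ENNReal.ofReal (s ^ (ε - r⁻¹.toReal))) * κ := by
            rw [← ENNReal.ofReal_mul (by positivity), ← ENNReal.ofReal_mul (by positivity)]
            refine mul_le_mul' (mul_le_mul' le_rfl (ENNReal.ofReal_le_ofReal ?_)) le_rfl
            calc _ = s ^ (-(r⁻¹.toReal)) * s ^ (1 - θ₁) * b s / t := by field_simp
              _ ≤ s ^ (-(r⁻¹.toReal)) * s ^ (1 - θ₁) * (C4 * (t ^ ε * s ^ (-ε)) * b t) / t := by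
                  exact div_le_div_of_nonneg_right (mul_le_mul_of_nonneg_left (h4 s t hs0 hs.2).1
                    (by positivity)) ht.le
              _ = C4 * t ^ ε * b t / t * (s ^ (-(r⁻¹.toReal)) * s ^ (1 - θ₁) * s ^ (-ε)) := by ring
              _ = _ := by
                  rw [← Real.rpow_add hs0, ← Real.rpow_add hs0]
                  congr 2
                  rw [hεd]; ring
        _ = _ := by ring
    · calc _ ≤ C1 * ENNReal.ofReal (C4 * t ^ ε * b t / t) * κ * (C5 * ENNReal.ofReal (t ^ ε)) := by
            gcongr
            exact h5 t ht
        _ = C1 * C5 * κ * (ENNReal.ofReal (C4 * t ^ ε * b t / t) * ENNReal.ofReal (t ^ ε)) := by ring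
        _ = C1 * C5 * κ * (ENNReal.ofReal C4 * (W * ENNReal.ofReal (b t / a t))) := by
            rw [hW, ← ENNReal.ofReal_mul (by positivity), ← ENNReal.ofReal_mul (by positivity),
              ← ENNReal.ofReal_mul (by positivity), ← ht1]
            have : t ^ (1 - θ₁) = t ^ ε * t ^ ε := by
              rw [← Real.rpow_add ht]; congr 1; rw [hεd]; ring
            rw [this]
            congr 2
            field_simp
        _ ≤ C1 * C5 * κ * (ENNReal.ofReal C4 * (W * (ENNReal.ofReal C3 * B))) := by
            gcongr
            exact h3 t ht
        _ = _ := by ring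
  have o2 : LqNorm r (Ioi t) (fun s => ENNReal.ofReal (s ^ (-(r⁻¹.toReal)) * (b s / a s)) *
      LqNorm q (Ioo 0 s)
        (fun u => ENNReal.ofReal (u ^ (-θ₁ - q⁻¹.toReal) * a u) * Kf N₀ N₁ u h)) ≤
      Tq * (C1 + C2) * (W * B * κ) := by
    refine (Lq_dom hr measurableSet_Ioi (c := Tq * (C1 + C2) * (W * κ))
      (g := svWgt r (fun s => b s / a s)) (by finiteness) ?_).trans (le_of_eq ?_)
    · intro s hs
      rw [mul_comm]
      unfold svWgt
      gcongr
      exact i3 s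
    · change Tq * (C1 + C2) * (W * κ) * B = _
      ring
  have fin : normL N₀ N₁ θ₁ r q b a h ≤
      Tr * (C1 * ENNReal.ofReal C4 * C5 * ENNReal.ofReal C3 + Tq * (C1 + C2)) * κ * (W * B) := by
    unfold normL
    rw [← Ioc_union_Ioi_eq_Ioi ht.le]
    refine (Lq_union _ _ _).trans ?_
    calc _ ≤ Tr * (C1 * ENNReal.ofReal C4 * C5 * ENNReal.ofReal C3 * (W * B * κ) +
          Tq * (C1 + C2) * (W * B * κ)) := by gcongr
      _ = _ := by ring
  have one : ENNReal.ofReal (ρ t) * (W * B) = 1 := by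
    rw [← ENNReal.ofReal_toReal hBf, hW, ← ENNReal.ofReal_mul (by positivity),
      ← ENNReal.ofReal_mul (by rw [hρ]; positivity), hρ, Real.rpow_neg ht.le]
    have ht2 : t ^ θ₁ ≠ 0 := by positivity
    rw [← ENNReal.ofReal_one]
    congr 1
    have := hBp.ne'
    rw [← hB]
    have hB0 : B.toReal ≠ 0 := hBp.ne'
    field_simp
  calc _ ≤ ENNReal.ofReal (ρ t) * (Tr * (C1 * ENNReal.ofReal C4 * C5 * ENNReal.ofReal C3 +
        Tq * (C1 + C2)) * κ * (W * B)) := by gcongr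
    _ = Tr * (C1 * ENNReal.ofReal C4 * C5 * ENNReal.ofReal C3 +
        Tq * (C1 + C2)) * κ * (ENNReal.ofReal (ρ t) * (W * B)) := by ring
    _ = _ := by rw [one, mul_one]

lemma normK_disc {r : ℝ≥0∞} (hr : 0 < r) {D : ℝ} (hD : 1 ≤ D) {x : ℤ → ℝ} (hx : Lac D x)
    {θ : ℝ} {b : ℝ → ℝ} {v : ℤ → ℝ} {Cv : ℝ} (hCv : 0 < Cv)
    (hv : ∀ k, ∀ u ∈ Ico (x k) (x (k + 1)),
      u ^ (-θ) * b u ≤ Cv * v k ∧ v k ≤ Cv * (u ^ (-θ) * b u)) :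
    ∃ C : ℝ≥0∞, C ≠ ∞ ∧ ∀ (N₀ N₁ : E → ℝ≥0∞) (f : E),
      normK N₀ N₁ θ r b f ≤ C * lq r (fun k => ENNReal.ofReal (v k) * Kf N₀ N₁ (x k) f) ∧
      lq r (fun k => ENNReal.ofReal (v k) * Kf N₀ N₁ (x k) f) ≤ C * normK N₀ N₁ θ r b f := by
  obtain ⟨C1, hC1, h1⟩ := disc_upper hr hx
  obtain ⟨C2, hC2, h2⟩ := disc_lower hr hx
  have split : ∀ u : ℝ, 0 < u → ENNReal.ofReal (u ^ (-θ - r⁻¹.toReal) * b u) =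
      ENNReal.ofReal (u ^ (-r⁻¹.toReal)) * ENNReal.ofReal (u ^ (-θ) * b u) := by
    intro u hu
    rw [← ENNReal.ofReal_mul (by positivity), sub_eq_add_neg, Real.rpow_add hu]
    congr 1
    ring
  refine ⟨C1 * (ENNReal.ofReal Cv * ENNReal.ofReal D) + ENNReal.ofReal Cv * C2, by finiteness,
    fun N₀ N₁ f => ⟨?_, ?_⟩⟩
  · have e := h1 (fun u => ENNReal.ofReal (u ^ (-θ - r⁻¹.toReal) * b u) * Kf N₀ N₁ u f)
      (fun k => ENNReal.ofReal Cv * ENNReal.ofReal D *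
        (ENNReal.ofReal (v k) * Kf N₀ N₁ (x k) f)) ?_
    · have e2 : lq r (fun k => ENNReal.ofReal Cv * ENNReal.ofReal D *
        (ENNReal.ofReal (v k) * Kf N₀ N₁ (x k) f)) ≤ ENNReal.ofReal Cv * ENNReal.ofReal D *
          lq r (fun k => ENNReal.ofReal (v k) * Kf N₀ N₁ (x k) f) :=
        lq_dom hr (fun k => le_rfl)
      calc normK N₀ N₁ θ r b f ≤ _ := e
        _ ≤ C1 * (ENNReal.ofReal Cv * ENNReal.ofReal D *
          lq r (fun k => ENNReal.ofReal (v k) * Kf N₀ N₁ (x k) f)) := mul_le_mul' le_rfl e2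
        _ = C1 * (ENNReal.ofReal Cv * ENNReal.ofReal D) *
          lq r (fun k => ENNReal.ofReal (v k) * Kf N₀ N₁ (x k) f) := by ring
        _ ≤ _ := mul_le_mul' le_self_add le_rfl
    · intro k u hu
      have hu0 : 0 < u := (hx.1 k).trans_le hu.1
      have hK : Kf N₀ N₁ u f ≤ ENNReal.ofReal D * Kf N₀ N₁ (x k) f :=
        Kf_scale _ _ hD (hu.2.le.trans (hx.2.2 k)) _
      simp only [split u hu0]
      calc _ ≤ ENNReal.ofReal (u ^ (-r⁻¹.toReal)) * ENNReal.ofReal (Cv * v k) *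
            (ENNReal.ofReal D * Kf N₀ N₁ (x k) f) :=
          mul_le_mul' (mul_le_mul' le_rfl (ENNReal.ofReal_le_ofReal (hv k u hu).1)) hK
        _ = _ := by rw [ENNReal.ofReal_mul hCv.le]; ring
  · have e := h2 (fun u => ENNReal.ofReal (u ^ (-θ - r⁻¹.toReal) * b u) * Kf N₀ N₁ u f)
      (fun k => ENNReal.ofReal Cv⁻¹ * (ENNReal.ofReal (v k) * Kf N₀ N₁ (x k) f)) ?_
    · have e2 : lq r (fun k => ENNReal.ofReal (v k) * Kf N₀ N₁ (x k) f) ≤ ENNReal.ofReal Cv *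
          lq r (fun k => ENNReal.ofReal Cv⁻¹ * (ENNReal.ofReal (v k) * Kf N₀ N₁ (x k) f)) := by
        refine lq_dom hr (fun k => ?_)
        rw [← mul_assoc, ← ENNReal.ofReal_mul hCv.le, mul_inv_cancel₀ hCv.ne', ENNReal.ofReal_one,
          one_mul]
      calc _ ≤ _ := e2
        _ ≤ ENNReal.ofReal Cv * (C2 * normK N₀ N₁ θ r b f) := mul_le_mul' le_rfl e
        _ = ENNReal.ofReal Cv * C2 * normK N₀ N₁ θ r b f := by ring
        _ ≤ _ := mul_le_mul' le_add_self le_rfl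
    · intro k u hu
      have hu0 : 0 < u := (hx.1 k).trans_le hu.1
      have hK : Kf N₀ N₁ (x k) f ≤ Kf N₀ N₁ u f := Kf_mono _ _ hu.1 _
      simp only [split u hu0]
      have : Cv⁻¹ * v k ≤ u ^ (-θ) * b u := by
        rw [inv_mul_le_iff₀ hCv]; exact (hv k u hu).2
      calc _ = ENNReal.ofReal (u ^ (-r⁻¹.toReal)) * ENNReal.ofReal (Cv⁻¹ * v k) *
            Kf N₀ N₁ (x k) f := by rw [ENNReal.ofReal_mul (by positivity)]; ring
        _ ≤ _ := mul_le_mul' (mul_le_mul' le_rfl (ENNReal.ofReal_le_ofReal this)) hK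

lemma K_le_KX (A₀ A₁ : QuasiBanach E) {q r : ℝ≥0∞} (hq : 0 < q) (hr : 0 < r) {a b : ℝ → ℝ}
    (ha : SVs a) (hb : SVs b) {θ₁ : ℝ} (hθ₁ : 0 < θ₁)
    (hfin : Bt r (fun s => b s / a s) 1 ≠ ∞)
    {ρ : ℝ → ℝ} (hρ : ∀ t, ρ t = t ^ θ₁ / (a t * (Bt r (fun s => b s / a s) t).toReal)) :
    ∃ C : ℝ≥0∞, C ≠ ∞ ∧ ∀ (t : ℝ) (f : E), 0 < t →
      Kf A₀.N A₁.N t f ≤ C * Kf A₀.N (normL A₀.N A₁.N θ₁ r q b a) (ρ t) f := by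
  obtain ⟨C, hC, h⟩ := X_low (E := E) hq hr ha hb hθ₁ hfin hρ
  obtain ⟨Q, hQ1, hQ, hQq⟩ := A₀.quasi
  refine ⟨Q * (1 + C), by finiteness, fun t f ht => ?_⟩
  have hne : Q * (1 + C) ≠ 0 := by
    refine mul_ne_zero ?_ ?_
    · exact (lt_of_lt_of_le one_pos hQ1).ne'
    · simp
  rw [Kf, Kf, ENNReal.mul_iInf_of_ne hne (by finiteness)]
  refine le_iInf fun g => ?_
  calc Kf A₀.N A₁.N t f ≤ Q * (A₀.N g + Kf A₀.N A₁.N t (f - g)) :=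
        Kf_le_add A₀ _ hQ1 hQ hQq t f g
    _ ≤ Q * (A₀.N g + C * (ENNReal.ofReal (ρ t) * normL A₀.N A₁.N θ₁ r q b a (f - g))) :=
        mul_le_mul' le_rfl (add_le_add le_rfl (h _ _ t (f - g) ht))
    _ ≤ Q * ((1 + C) * A₀.N g +
          (1 + C) * (ENNReal.ofReal (ρ t) * normL A₀.N A₁.N θ₁ r q b a (f - g))) := by
        refine mul_le_mul' le_rfl (add_le_add ?_ (mul_le_mul' le_add_self le_rfl))
        calc A₀.N g = 1 * A₀.N g := (one_mul _).symm
          _ ≤ _ := mul_le_mul' le_self_add le_rfl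
    _ = _ := by ring

lemma KX_le_S (A₀ A₁ : QuasiBanach E) {q r : ℝ≥0∞} (hq : 0 < q) (hr : 0 < r) {a b : ℝ → ℝ}
    (ha : SVs a) (hb : SVs b) {θ₁ γ : ℝ} (hθ₁ : 0 < θ₁) (hθ₁' : θ₁ < 1) (hγ0 : 0 ≤ γ)
    (hγ : γ < θ₁) (hfin : Bt r (fun s => b s / a s) 1 ≠ ∞)
    {ρ : ℝ → ℝ} (hρ : ∀ t, ρ t = t ^ θ₁ / (a t * (Bt r (fun s => b s / a s) t).toReal))
    {M : ℝ} (hM : 2 ≤ M) :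
    ∃ C : ℝ≥0∞, C ≠ ∞ ∧ ∀ (t : ℝ) (f : E), 0 < t →
      Kf A₀.N (normL A₀.N A₁.N θ₁ r q b a) (ρ t) f ≤
        C * ⨆ m : ℕ, ENNReal.ofReal (M ^ (-γ)) ^ m * Kf A₀.N A₁.N (M ^ m * t) f := by
  obtain ⟨C, hC, h⟩ := X_up (E := E) hq hr ha hb hθ₁ hθ₁' hγ hfin hρ
  obtain ⟨Q, hQ1, hQ, hQq⟩ := A₀.quasi
  have hM0 : 0 < M := by linarith
  set R : ℝ≥0∞ := Q * (1 + ENNReal.ofReal M) with hR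
  have hR1 : 1 ≤ R := one_le_mul hQ1 le_self_add
  have hRf : R ≠ ∞ := by rw [hR]; finiteness
  refine ⟨1 + C * R, by finiteness, fun t f ht => ?_⟩
  set S := ⨆ m : ℕ, ENNReal.ofReal (M ^ (-γ)) ^ m * Kf A₀.N A₁.N (M ^ m * t) f with hS
  have hS1 : Kf A₀.N A₁.N t f ≤ S := by
    have := le_iSup (fun m : ℕ => ENNReal.ofReal (M ^ (-γ)) ^ m * Kf A₀.N A₁.N (M ^ m * t) f) 0
    simpa using this
  have hS2 : ∀ u, t < u → Kf A₀.N A₁.N u f ≤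
      ENNReal.ofReal M * (ENNReal.ofReal ((u / t) ^ γ) * S) := by
    intro u hu
    obtain ⟨m, hm1, hm2⟩ := exists_nat_pow_near ((one_le_div ht).2 hu.le)
      (by linarith : (1:ℝ) < M)
    have e1 : u ≤ M * (M ^ m * t) := by
      rw [div_lt_iff₀ ht] at hm2
      calc u ≤ _ := hm2.le
        _ = _ := by rw [pow_succ]; ring
    refine (Kf_scale _ _ (by linarith) e1 f).trans (mul_le_mul' le_rfl ?_)
    have e2 := le_iSup (fun m : ℕ => ENNReal.ofReal (M ^ (-γ)) ^ m * Kf A₀.N A₁.N (M ^ m * t) f) m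
    have e3 : ENNReal.ofReal ((M ^ γ) ^ m) * ENNReal.ofReal (M ^ (-γ)) ^ m = 1 := by
      rw [← ENNReal.ofReal_pow (by positivity), ← ENNReal.ofReal_mul (by positivity), ← mul_pow,
        ← Real.rpow_add hM0]
      simp
    have e4 : (M ^ γ) ^ m ≤ (u / t) ^ γ := by
      rw [← Real.rpow_mul_natCast hM0.le, mul_comm, Real.rpow_natCast_mul hM0.le]
      exact Real.rpow_le_rpow (by positivity) hm1 hγ0
    calc Kf A₀.N A₁.N (M ^ m * t) f
        = ENNReal.ofReal ((M ^ γ) ^ m) *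
          (ENNReal.ofReal (M ^ (-γ)) ^ m * Kf A₀.N A₁.N (M ^ m * t) f) := by
          rw [← mul_assoc, e3, one_mul]
      _ ≤ _ := mul_le_mul' (ENNReal.ofReal_le_ofReal e4) e2
  have main : ∀ κ, S < κ → κ ≠ ∞ →
      Kf A₀.N (normL A₀.N A₁.N θ₁ r q b a) (ρ t) f ≤ (1 + C * R) * κ := by
    intro κ hκ hκf
    obtain ⟨g, hg⟩ := iInf_lt_iff.1 (lt_of_le_of_lt hS1 hκ)
    have hg0 : A₀.N g ≤ κ := le_self_add.trans hg.le
    have hg1 : ENNReal.ofReal t * A₁.N (f - g) ≤ κ := le_add_self.trans hg.le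
    have hX := h A₀.N A₁.N t (f - g) (R * κ) (by finiteness) ht ?_ ?_
    · calc _ ≤ A₀.N g + ENNReal.ofReal (ρ t) * normL A₀.N A₁.N θ₁ r q b a (f - g) :=
            iInf_le _ g
        _ ≤ κ + C * (R * κ) := add_le_add hg0 hX
        _ = _ := by ring
    · intro u hu hut
      calc _ ≤ ENNReal.ofReal u * A₁.N (f - g) := Kf_le_one _ _ _ _
        _ = ENNReal.ofReal (u / t) * (ENNReal.ofReal t * A₁.N (f - g)) := by
            rw [← mul_assoc, ← ENNReal.ofReal_mul (by positivity), div_mul_cancel₀ _ ht.ne']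
        _ ≤ ENNReal.ofReal (u / t) * (1 * κ) := by rw [one_mul]; exact mul_le_mul' le_rfl hg1
        _ ≤ _ := mul_le_mul' le_rfl (mul_le_mul' hR1 le_rfl)
    · intro u hu
      have h1 : (1 : ℝ≥0∞) ≤ ENNReal.ofReal ((u / t) ^ γ) := by
        rw [ENNReal.one_le_ofReal]
        exact Real.one_le_rpow ((one_le_div ht).2 hu.le) hγ0
      calc _ ≤ Q * (A₀.N g + Kf A₀.N A₁.N u f) := Kf_sub_le A₀ _ hQ1 hQ hQq u f g
        _ ≤ Q * (ENNReal.ofReal ((u / t) ^ γ) * κ +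
              ENNReal.ofReal M * (ENNReal.ofReal ((u / t) ^ γ) * κ)) := by
            refine mul_le_mul' le_rfl (add_le_add ?_ ?_)
            · calc A₀.N g ≤ 1 * κ := by rw [one_mul]; exact hg0
                _ ≤ _ := mul_le_mul' h1 le_rfl
            · exact (hS2 u hu).trans (mul_le_mul' le_rfl (mul_le_mul' le_rfl hκ.le))
        _ = _ := by rw [hR]; ring
  have hne : 1 + C * R ≠ 0 := by simp
  have hnf : 1 + C * R ≠ ∞ := by finiteness
  rw [mul_comm, ← ENNReal.div_le_iff hne hnf]
  refine le_of_forall_gt_imp_ge_of_dense fun κ hκ => ?_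
  rcases eq_or_ne κ ∞ with rfl | hκf
  · exact le_top
  · rw [ENNReal.div_le_iff hne hnf, mul_comm]
    exact main κ hκ hκf

lemma vS_le {M γ γ' : ℝ} (hM : 2 ≤ M) {v : ℤ → ℝ} {C : ℝ} (hC : 0 < C)
    (hv : ∀ (n : ℤ) (m : ℕ), v n ≤ C * (M ^ m) ^ γ' * v (n + m)) (k : ℤ → ℝ≥0∞) (n : ℤ) :
    ENNReal.ofReal (v n) * ⨆ m : ℕ, ENNReal.ofReal (M ^ (-γ)) ^ m * k (n + m) ≤
      ENNReal.ofReal C * ⨆ m : ℕ, ENNReal.ofReal (M ^ (γ' - γ)) ^ m *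
        (ENNReal.ofReal (v (n + m)) * k (n + m)) := by
  have hM0 : 0 < M := by linarith
  rw [ENNReal.mul_iSup, ENNReal.mul_iSup]
  refine iSup_mono fun m => ?_
  calc _ ≤ ENNReal.ofReal (C * (M ^ m) ^ γ' * v (n + m)) *
        (ENNReal.ofReal (M ^ (-γ)) ^ m * k (n + m)) :=
        mul_le_mul' (ENNReal.ofReal_le_ofReal (hv n m)) le_rfl
    _ = ENNReal.ofReal C * ((ENNReal.ofReal ((M ^ m) ^ γ') * ENNReal.ofReal (M ^ (-γ)) ^ m) *
          (ENNReal.ofReal (v (n + m)) * k (n + m))) := by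
        rw [ENNReal.ofReal_mul (by positivity), ENNReal.ofReal_mul (by positivity)]
        ring
    _ = _ := by
        rw [← ENNReal.ofReal_pow (by positivity), ← ENNReal.ofReal_mul (by positivity),
          ← ENNReal.ofReal_pow (by positivity), ← Real.rpow_natCast_mul hM0.le, mul_comm (m:ℝ),
          Real.rpow_mul_natCast hM0.le, ← mul_pow, ← Real.rpow_add hM0, sub_eq_add_neg]


theorem theorem15
    (A₀ A₁ : QuasiBanach E)
    (hne : ∃ x : E, x ≠ 0 ∧ A₀.N x ≠ ∞ ∧ A₁.N x ≠ ∞)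
    (θ₁ θ : ℝ) (hθ₁ : 0 < θ₁) (hθ₁' : θ₁ < 1) (hθ : 0 ≤ θ) (hθ' : θ < 1)
    (q₁ r r₁ : ℝ≥0∞) (hq₁ : 0 < q₁) (hr : 0 < r) (hr₁ : 0 < r₁)
    (a a₁ b₁ : ℝ → ℝ)
    (h_sv_a : SlowlyVarying a)
    (h_sv_a₁ : SlowlyVarying a₁)
    (h_sv_b₁ : SlowlyVarying b₁)
    (hfin : LqNorm r₁ (Ioi 1) (svWgt r₁ (fun s => b₁ s / a₁ s)) ≠ ∞)
    (hθ0 : θ = 0 → LqNorm r (Ioi 1) (svWgt r (fun s => a s)) ≠ ∞)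
    (c₁ ρ : ℝ → ℝ)
    (hc₁ : ∀ t, c₁ t = a₁ t * (LqNorm r₁ (Ioi t) (svWgt r₁ (fun s => b₁ s / a₁ s))).toReal)
    (hρ : ∀ t, ρ t = t ^ θ₁ / c₁ t) :
    EquivNorms
      (normK A₀.N (normL A₀.N A₁.N θ₁ r₁ q₁ b₁ a₁) θ r a)
      (normK A₀.N A₁.N (θ * θ₁) r (fun t => c₁ t ^ θ * a (ρ t))) := by
  have ha := h_sv_a.svs
  have ha₁ := h_sv_a₁.svs
  have hb₁ := h_sv_b₁.svs
  have hd := hb₁.div ha₁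
  have hfin' : Bt r₁ (fun s => b₁ s / a₁ s) 1 ≠ ∞ := hfin
  have hc : SVs c₁ := by
    have := ha₁.mul (Bt_svs hr₁ hd hfin')
    rwa [show c₁ = fun t => a₁ t * (Bt r₁ (fun s => b₁ s / a₁ s) t).toReal from funext hc₁]
  have hρ' : ∀ t, ρ t = t ^ θ₁ / (a₁ t * (Bt r₁ (fun s => b₁ s / a₁ s) t).toReal) := by
    intro t; rw [hρ, hc₁]; rfl
  have hρp : ∀ t, 0 < t → 0 < ρ t := by
    intro t ht
    have := hc.1 t ht
    rw [hρ]; positivity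
  have hap : ∀ t, 0 < t → 0 < a (ρ t) := fun t ht => ha.1 _ (hρp t ht)
  -- the exponents
  have hlt : θ * θ₁ < θ₁ := by nlinarith
  have h0 : 0 ≤ θ * θ₁ := by positivity
  obtain ⟨γ, hγ1, hγ2⟩ := exists_between hlt
  obtain ⟨γ', hγ'1, hγ'2⟩ := exists_between hγ1
  -- the dilation factor
  obtain ⟨C0, hC0, hrho⟩ := rho_upper hc θ₁ (half_pos hθ₁)
  obtain ⟨M, hM2, hMC⟩ : ∃ M : ℝ, 2 ≤ M ∧ 2 * C0 ≤ M ^ (θ₁ / 2) :=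
    ((eventually_ge_atTop 2).and
      ((tendsto_rpow_atTop (half_pos hθ₁)).eventually_ge_atTop (2 * C0))).exists
  have hM0 : 0 < M := by linarith
  set D : ℝ := C0 * M ^ (θ₁ + θ₁ / 2) with hDd
  have hMp : 1 ≤ M ^ (θ₁ + θ₁ / 2) := Real.one_le_rpow (by linarith) (by positivity)
  have hC0D : C0 ≤ D := le_mul_of_one_le_right (by linarith) hMp
  have hD : 1 ≤ D := hC0.trans hC0D
  have cmp1 : ∀ t u, 0 < t → t ≤ u → u ≤ M * t → ρ u ≤ D * ρ t := by
    intro t u ht htu hu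
    have hp := hρp t ht
    calc ρ u ≤ C0 * (u / t) ^ (θ₁ + θ₁ / 2) * ρ t := by
          rw [hρ u, hρ t]; exact (hrho t u ht htu).1
      _ ≤ C0 * M ^ (θ₁ + θ₁ / 2) * ρ t := by
          have h1 : (u / t) ^ (θ₁ + θ₁ / 2) ≤ M ^ (θ₁ + θ₁ / 2) :=
            Real.rpow_le_rpow (div_nonneg (ht.le.trans htu) ht.le)
              ((div_le_iff₀ ht).2 hu) (by positivity)
          exact mul_le_mul_of_nonneg_right
            (mul_le_mul_of_nonneg_left h1 (by linarith)) hp.le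
  have low : ∀ t u, 0 < t → t ≤ u → (u / t) ^ (θ₁ / 2) * ρ t ≤ C0 * ρ u := by
    intro t u ht htu
    have := (hrho t u ht htu).2
    rw [← hρ u, ← hρ t, show θ₁ - θ₁ / 2 = θ₁ / 2 by ring] at this
    exact this
  have cmp2 : ∀ t u, 0 < t → t ≤ u → ρ t ≤ D * ρ u := by
    intro t u ht htu
    have hp := hρp t ht
    have hpu := hρp u (ht.trans_le htu)
    have h1 : 1 ≤ (u / t) ^ (θ₁ / 2) :=
      Real.one_le_rpow ((one_le_div ht).2 htu) (by positivity)
    calc ρ t ≤ (u / t) ^ (θ₁ / 2) * ρ t := le_mul_of_one_le_left hp.le h1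
      _ ≤ C0 * ρ u := low t u ht htu
      _ ≤ _ := mul_le_mul_of_nonneg_right hC0D hpu.le
  -- the two lacunary sequences
  set x : ℤ → ℝ := fun k => M ^ k with hxd
  have hxp : ∀ k, 0 < x k := fun k => zpow_pos hM0 k
  have hxs : ∀ k, x (k + 1) = M * x k := by
    intro k; simp only [hxd]; rw [zpow_add_one₀ hM0.ne']; ring
  have hxle : ∀ k, x k ≤ x (k + 1) := by
    intro k; rw [hxs]; nlinarith [hxp k]
  have hx : Lac M x := ⟨hxp, fun k => by rw [hxs]; nlinarith [hxp k], fun k => (hxs k).le⟩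
  have hxm : ∀ (n : ℤ) (m : ℕ), x (n + m) = M ^ m * x n := by
    intro n m; simp only [hxd]; rw [zpow_add₀ hM0.ne', zpow_natCast]; ring
  have hy : Lac D (fun k => ρ (x k)) := by
    refine ⟨fun k => hρp _ (hxp k), fun k => ?_, fun k => cmp1 _ _ (hxp k) (hxle k) (hxs k).le⟩
    have e := low _ _ (hxp k) (hxle k)
    have e1 : x (k + 1) / x k = M := by
      rw [hxs, mul_div_assoc, div_self (hxp k).ne', mul_one]
    rw [e1] at e
    have hp := hρp _ (hxp k)
    have e2 : C0 * (2 * ρ (x k)) ≤ C0 * ρ (x (k + 1)) := by nlinarith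
    exact le_of_mul_le_mul_left e2 (by linarith)
  -- the discrete weights
  set v : ℤ → ℝ := fun k => ρ (x k) ^ (-θ) * a (ρ (x k)) with hvd
  obtain ⟨Cv, hCv, hblock⟩ := ha.block hθ hD
  have wid : ∀ u, 0 < u →
      u ^ (-(θ * θ₁)) * (c₁ u ^ θ * a (ρ u)) = ρ u ^ (-θ) * a (ρ u) := by
    intro u hu
    have hcu := hc.1 u hu
    have : ρ u ^ (-θ) = u ^ (-(θ * θ₁)) * c₁ u ^ θ := by
      rw [hρ u, Real.div_rpow (by positivity) hcu.le, ← Real.rpow_mul hu.le,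
        Real.rpow_neg hcu.le, div_inv_eq_mul]
      congr 2
      ring
    rw [this]; ring
  obtain ⟨C1, hC1, hd1⟩ := normK_disc (E := E) hr (by linarith : 1 ≤ M) hx (θ := θ * θ₁)
    (b := fun t => c₁ t ^ θ * a (ρ t)) (v := v) hCv (by
      intro k u hu
      have hu0 := (hxp k).trans_le hu.1
      have k1 := cmp1 _ _ (hxp k) hu.1 (hu.2.le.trans (hxs k).le)
      have k2 := cmp2 _ _ (hxp k) hu.1
      have p1 := hρp _ (hxp k)
      have p2 := hρp _ hu0
      simp only [wid u hu0]
      exact ⟨hblock _ _ p2 p1 k1 k2, hblock _ _ p1 p2 k2 k1⟩)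
  obtain ⟨C2, hC2, hd2⟩ := normK_disc (E := E) hr hD hy (θ := θ) (b := a) (v := v) hCv (by
      intro k u hu
      have p1 := hρp _ (hxp k)
      have hu0 := p1.trans_le hu.1
      have k1 := hu.2.le.trans (hy.2.2 k)
      have k2 : ρ (x k) ≤ D * u := hu.1.trans (le_mul_of_one_le_left hu0.le hD)
      exact ⟨hblock _ _ hu0 p1 k1 k2, hblock _ _ p1 hu0 k2 k1⟩)
  obtain ⟨C3, hC3, hlow⟩ := K_le_KX A₀ A₁ hq₁ hr₁ ha₁ hb₁ hθ₁ hfin' hρ'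
  obtain ⟨C4, hC4, hup⟩ := KX_le_S A₀ A₁ hq₁ hr₁ ha₁ hb₁ hθ₁ hθ₁' (h0.trans hγ1.le) hγ2 hfin' hρ' hM2
  obtain ⟨C5, hC5, hvb⟩ := v_bound hc ha hθ hθ₁ hγ'1 hρ
  have hl : ENNReal.ofReal (M ^ (γ' - γ)) < 1 := by
    rw [ENNReal.ofReal_lt_one]
    exact Real.rpow_lt_one_of_one_lt_of_neg (by linarith) (by linarith)
  obtain ⟨C6, hC6, hhardy⟩ := lq_hardy hr hl
  have hvm : ∀ (n : ℤ) (m : ℕ), v n ≤ C5 * (M ^ m) ^ γ' * v (n + m) := by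
    intro n m
    have hle : x n ≤ x (n + m) := by
      rw [hxm]; exact le_mul_of_one_le_left (hxp n).le (one_le_pow₀ (by linarith))
    have := hvb (x n) (x (n + m)) (hxp n) hle
    rwa [hxm, mul_div_assoc, div_self (hxp n).ne', mul_one, ← hxm] at this
  set NX := normL A₀.N A₁.N θ₁ r₁ q₁ b₁ a₁ with hNX
  have lower : ∀ f, normK A₀.N A₁.N (θ * θ₁) r (fun t => c₁ t ^ θ * a (ρ t)) f ≤
      C1 * C3 * C2 * normK A₀.N NX θ r a f := by
    intro f
    have e : lq r (fun k => ENNReal.ofReal (v k) * Kf A₀.N A₁.N (x k) f) ≤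
        C3 * lq r (fun k => ENNReal.ofReal (v k) * Kf A₀.N NX (ρ (x k)) f) := by
      refine lq_dom hr fun k => ?_
      calc _ ≤ ENNReal.ofReal (v k) * (C3 * Kf A₀.N NX (ρ (x k)) f) :=
            mul_le_mul' le_rfl (hlow _ f (hxp k))
        _ = _ := by ring
    calc _ ≤ C1 * _ := (hd1 A₀.N A₁.N f).1
      _ ≤ C1 * (C3 * (C2 * normK A₀.N NX θ r a f)) :=
          mul_le_mul' le_rfl (e.trans (mul_le_mul' le_rfl (hd2 A₀.N NX f).2))
      _ = _ := by ring
  have upper : ∀ f, normK A₀.N NX θ r a f ≤ C2 * (C4 * ENNReal.ofReal C5) * C6 * C1 *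
      normK A₀.N A₁.N (θ * θ₁) r (fun t => c₁ t ^ θ * a (ρ t)) f := by
    intro f
    have e : lq r (fun k => ENNReal.ofReal (v k) * Kf A₀.N NX (ρ (x k)) f) ≤
        C4 * ENNReal.ofReal C5 * lq r (fun n => ⨆ m : ℕ, ENNReal.ofReal (M ^ (γ' - γ)) ^ m *
          (ENNReal.ofReal (v (n + m)) * Kf A₀.N A₁.N (x (n + m)) f)) := by
      refine lq_dom hr fun k => ?_
      have e1 := hup (x k) f (hxp k)
      have e2 := vS_le (γ := γ) hM2 hC5 hvm (fun k => Kf A₀.N A₁.N (x k) f) k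
      calc _ ≤ ENNReal.ofReal (v k) * (C4 * ⨆ m : ℕ, ENNReal.ofReal (M ^ (-γ)) ^ m *
              Kf A₀.N A₁.N (x (k + m)) f) := by
            refine mul_le_mul' le_rfl ?_
            simp only [hxm]
            exact e1
        _ = C4 * (ENNReal.ofReal (v k) * ⨆ m : ℕ, ENNReal.ofReal (M ^ (-γ)) ^ m *
              Kf A₀.N A₁.N (x (k + m)) f) := by ring
        _ ≤ _ := by
            rw [mul_assoc]
            exact mul_le_mul' le_rfl e2
    have e3 := hhardy (fun k => ENNReal.ofReal (v k) * Kf A₀.N A₁.N (x k) f)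
    calc _ ≤ C2 * _ := (hd2 A₀.N NX f).1
      _ ≤ C2 * (C4 * ENNReal.ofReal C5 * (C6 * (C1 *
            normK A₀.N A₁.N (θ * θ₁) r (fun t => c₁ t ^ θ * a (ρ t)) f))) :=
          mul_le_mul' le_rfl (e.trans (mul_le_mul' le_rfl
            (e3.trans (mul_le_mul' le_rfl (hd1 A₀.N A₁.N f).2))))
      _ = _ := by ring
  have hCne : C1 * C3 * C2 + C2 * (C4 * ENNReal.ofReal C5) * C6 * C1 + 1 ≠ 0 := by simp
  have hCf : C1 * C3 * C2 + C2 * (C4 * ENNReal.ofReal C5) * C6 * C1 + 1 ≠ ∞ := by finiteness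
  refine ⟨C1 * C3 * C2 + C2 * (C4 * ENNReal.ofReal C5) * C6 * C1 + 1,
    pos_iff_ne_zero.2 hCne, hCf, fun f => ⟨?_, ?_⟩⟩
  · rw [ENNReal.inv_mul_le_iff hCne hCf]
    refine (lower f).trans (mul_le_mul' ?_ le_rfl)
    exact le_self_add.trans le_self_add
  · refine (upper f).trans (mul_le_mul' ?_ le_rfl)
    exact le_add_self.trans le_self_add

end
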